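/- Let (R, 𝔪, k) be a regular local ring of dimension 3 with 𝔪 = (x_1, x_2, x_3) and let p ≥ 4. Let J_p = I_{p−1}(X_p) + (x_3^{p−1}) and J'_p = I_{p−1}(X'_p) + (x_3^{2(p−1)}), where X'_p is X_p with each entry squared; both R/J_p and R/J'_p have Tor-algebra class H(p, p−1) with standard-form minimal DG-algebra resolutions whose generators f_1^1, …, f_1^p correspond to the maximal minors and f_1^{p+1} to the added power. Let σ be an index set of cardinality t and Q_1 the degree-1 comparison map of the associated trimming complex. Then: (1) if p+1 ∉ σ, tm_σ(J_p) defines either a Golod ring or a ring of Tor-algebra class H(p − t, p − 1 − rank_k(Q_1 ⊗ k)); in particular, if σ = [t] with t < p, then tm_{[t]}(J_p) defines a ring of Tor-algebra class H(p − t, p − 1 − t); (2) if p+1 ∈ σ, tm_σ(J_p) defines a Golod ring; (3) if p+1 ∉ σ, tm_σ(J'_p) defines a ring of Tor-algebra class H(p − t, p − 1); (4) if p+1 ∈ σ, tm_σ(J'_p) defines a Golod ring. -/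

import Mathlib

open IsLocalRing

section TorAlgebraClasses

open IsLocalRing

variable (R : Type) [CommRing R] [IsLocalRing R]

/-- The trimming operation on ideals: for `I = (φ 0, …, φ (n-1))` and an index set
`σ`, `tm_σ(I) = (φ i : i ∉ σ) + 𝔪·(φ j : j ∈ σ)`. -/
def trimIdeal {n : ℕ} (φ : Fin n → R) (σ : Finset (Fin n)) : Ideal R :=
  Ideal.span (φ '' {i | i ∉ σ}) ⊔ maximalIdeal R * Ideal.span (φ '' {i | i ∈ σ})

/-- `R/J` has projective dimension `3` and Tor-algebra class `G(r)`
(Avramov–Kustin–Miller normal form): encoded by the existence of a minimal free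
resolution `0 → R^{n3} → R^{n2} → R^{n1} → R` of `R/J` carrying an associative
DG-algebra structure whose induced multiplication on `Tor^R_•(R/J, k) = F̄_•`
is, with respect to the standard bases, in the `G(r)` normal form:
`f̄₁ⁱ f̄₂ⁱ = f̄₃¹` for `1 ≤ i ≤ r` and all other products of basis elements vanish. -/
def HasTorClassG (J : Ideal R) (r : ℕ) : Prop :=
  ∃ (n1 n2 n3 : ℕ) (h3 : 0 < n3), r ≤ n1 ∧ r ≤ n2 ∧
  ∃ (d1 : (Fin n1 → R) →ₗ[R] R) (d2 : (Fin n2 → R) →ₗ[R] (Fin n1 → R))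
    (d3 : (Fin n3 → R) →ₗ[R] (Fin n2 → R))
    (m11 : (Fin n1 → R) →ₗ[R] (Fin n1 → R) →ₗ[R] (Fin n2 → R))
    (m12 : (Fin n1 → R) →ₗ[R] (Fin n2 → R) →ₗ[R] (Fin n3 → R)),
    -- minimal free resolution of R/J
    LinearMap.range d1 = J ∧
    LinearMap.ker d1 = LinearMap.range d2 ∧
    LinearMap.ker d2 = LinearMap.range d3 ∧
    LinearMap.ker d3 = ⊥ ∧
    (∀ v, d1 v ∈ maximalIdeal R) ∧
    (∀ v, d2 v ∈ maximalIdeal R • (⊤ : Submodule R (Fin n1 → R))) ∧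
    (∀ v, d3 v ∈ maximalIdeal R • (⊤ : Submodule R (Fin n2 → R))) ∧
    -- DG-algebra axioms
    (∀ a b, d2 (m11 a b) = d1 a • b - d1 b • a) ∧
    (∀ a, m11 a a = 0) ∧ (∀ a b, m11 a b = - m11 b a) ∧
    (∀ a z, d3 (m12 a z) = d1 a • z - m11 a (d2 z)) ∧
    (∀ a b c, m12 c (m11 a b) = m12 a (m11 b c)) ∧
    -- G(r) normal form for the induced products on `F ⊗ k`
    (∀ a b : Fin n1, m11 (Pi.single a 1) (Pi.single b 1) ∈
      maximalIdeal R • (⊤ : Submodule R (Fin n2 → R))) ∧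
    (∀ (a : Fin n1) (b : Fin n2),
      m12 (Pi.single a 1) (Pi.single b 1) -
        (if (a : ℕ) = (b : ℕ) ∧ (a : ℕ) < r then Pi.single (⟨0, h3⟩ : Fin n3) 1 else 0) ∈
      maximalIdeal R • (⊤ : Submodule R (Fin n3 → R)))

/-- `R/J` has projective dimension `3` and Tor-algebra class `H(p,q)`:
`f̄₁^{p+1} f̄₁ⁱ = f̄₂ⁱ` for `1 ≤ i ≤ p`, `f̄₁^{p+1} f̄₂^{p+i} = f̄₃ⁱ` for `1 ≤ i ≤ q`,
and all other products of basis elements vanish (0-based indices below). -/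
def HasTorClassH (J : Ideal R) (p q : ℕ) : Prop :=
  ∃ (n1 n2 n3 : ℕ) (hp : p < n1) (hpq : p + q ≤ n2) (hq3 : q ≤ n3),
  ∃ (d1 : (Fin n1 → R) →ₗ[R] R) (d2 : (Fin n2 → R) →ₗ[R] (Fin n1 → R))
    (d3 : (Fin n3 → R) →ₗ[R] (Fin n2 → R))
    (m11 : (Fin n1 → R) →ₗ[R] (Fin n1 → R) →ₗ[R] (Fin n2 → R))
    (m12 : (Fin n1 → R) →ₗ[R] (Fin n2 → R) →ₗ[R] (Fin n3 → R)),
    LinearMap.range d1 = J ∧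
    LinearMap.ker d1 = LinearMap.range d2 ∧
    LinearMap.ker d2 = LinearMap.range d3 ∧
    LinearMap.ker d3 = ⊥ ∧
    (∀ v, d1 v ∈ maximalIdeal R) ∧
    (∀ v, d2 v ∈ maximalIdeal R • (⊤ : Submodule R (Fin n1 → R))) ∧
    (∀ v, d3 v ∈ maximalIdeal R • (⊤ : Submodule R (Fin n2 → R))) ∧
    (∀ a b, d2 (m11 a b) = d1 a • b - d1 b • a) ∧
    (∀ a, m11 a a = 0) ∧ (∀ a b, m11 a b = - m11 b a) ∧
    (∀ a z, d3 (m12 a z) = d1 a • z - m11 a (d2 z)) ∧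
    (∀ a b c, m12 c (m11 a b) = m12 a (m11 b c)) ∧
    -- H(p,q) normal form for the induced products on `F ⊗ k`
    (∀ b : Fin n1, ∀ hb : (b : ℕ) < p,
      m11 (Pi.single (⟨p, hp⟩ : Fin n1) 1) (Pi.single b 1) -
        Pi.single (⟨(b : ℕ), by omega⟩ : Fin n2) 1 ∈
      maximalIdeal R • (⊤ : Submodule R (Fin n2 → R))) ∧
    (∀ a b : Fin n1, ¬((a : ℕ) = p ∧ (b : ℕ) < p) → ¬((b : ℕ) = p ∧ (a : ℕ) < p) →
      m11 (Pi.single a 1) (Pi.single b 1) ∈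
        maximalIdeal R • (⊤ : Submodule R (Fin n2 → R))) ∧
    (∀ b : Fin n2, ∀ hb1 : p ≤ (b : ℕ), ∀ hb2 : (b : ℕ) < p + q,
      m12 (Pi.single (⟨p, hp⟩ : Fin n1) 1) (Pi.single b 1) -
        Pi.single (⟨(b : ℕ) - p, by omega⟩ : Fin n3) 1 ∈
      maximalIdeal R • (⊤ : Submodule R (Fin n3 → R))) ∧
    (∀ (a : Fin n1) (b : Fin n2), ¬((a : ℕ) = p ∧ p ≤ (b : ℕ) ∧ (b : ℕ) < p + q) →
      m12 (Pi.single a 1) (Pi.single b 1) ∈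
        maximalIdeal R • (⊤ : Submodule R (Fin n3 → R)))

/-- `R/J` is a Golod ring: in the grade-3 setting of the paper this is equivalent
(Avramov–Kustin–Miller) to the multiplication on `Tor_+^R(R/J,k)` being trivial,
which is how it is encoded here: some minimal free resolution of `R/J` of length `≤ 3`
carries a DG-algebra structure all of whose products lie in `𝔪 • F`. -/
def IsGolodQuotient (J : Ideal R) : Prop :=
  ∃ (n1 n2 n3 : ℕ)
    (d1 : (Fin n1 → R) →ₗ[R] R) (d2 : (Fin n2 → R) →ₗ[R] (Fin n1 → R))
    (d3 : (Fin n3 → R) →ₗ[R] (Fin n2 → R))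
    (m11 : (Fin n1 → R) →ₗ[R] (Fin n1 → R) →ₗ[R] (Fin n2 → R))
    (m12 : (Fin n1 → R) →ₗ[R] (Fin n2 → R) →ₗ[R] (Fin n3 → R)),
    LinearMap.range d1 = J ∧
    LinearMap.ker d1 = LinearMap.range d2 ∧
    LinearMap.ker d2 = LinearMap.range d3 ∧
    LinearMap.ker d3 = ⊥ ∧
    (∀ v, d1 v ∈ maximalIdeal R) ∧
    (∀ v, d2 v ∈ maximalIdeal R • (⊤ : Submodule R (Fin n1 → R))) ∧
    (∀ v, d3 v ∈ maximalIdeal R • (⊤ : Submodule R (Fin n2 → R))) ∧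
    (∀ a b, d2 (m11 a b) = d1 a • b - d1 b • a) ∧
    (∀ a, m11 a a = 0) ∧ (∀ a b, m11 a b = - m11 b a) ∧
    (∀ a z, d3 (m12 a z) = d1 a • z - m11 a (d2 z)) ∧
    (∀ a b c, m12 c (m11 a b) = m12 a (m11 b c)) ∧
    -- trivial Tor multiplication
    (∀ a b, m11 a b ∈ maximalIdeal R • (⊤ : Submodule R (Fin n2 → R))) ∧
    (∀ a z, m12 a z ∈ maximalIdeal R • (⊤ : Submodule R (Fin n3 → R)))

end TorAlgebraClasses

section HilbertBurchExamples

variable {R : Type} [CommRing R]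

/-- The `p × (p-1)` matrix `X_p` (here `p = P+1`): the `c`-th column has
`x 0, x 1, x 2` (the paper's `x₁, x₂, x₃`) in rows `c, c+1, c+2` and `0` elsewhere. -/
def Xmat (x : Fin 3 → R) (P : ℕ) : Matrix (Fin (P + 1)) (Fin P) R :=
  Matrix.of fun l c =>
    if (l : ℕ) = (c : ℕ) then x 0
    else if (l : ℕ) = (c : ℕ) + 1 then x 1
    else if (l : ℕ) = (c : ℕ) + 2 then x 2
    else 0

/-- The signed maximal minors `Δ_i` of `X_p` (signed so that `∑ᵢ Δᵢ · (X_p)_{i,c} = 0`,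
i.e. the entries of the Hilbert–Burch differential `d₁`). -/
def minorDelta (x : Fin 3 → R) (P : ℕ) (i : Fin (P + 1)) : R :=
  (-1 : R) ^ (i : ℕ) * ((Xmat x P).submatrix i.succAbove id).det

/-- The ideal `J_p = I_{p-1}(X_p) + (x₃^{p-1})`, `p = P+1`. -/
def hilbJ (x : Fin 3 → R) (P : ℕ) : Ideal R :=
  Ideal.span (Set.range (minorDelta x P)) ⊔ Ideal.span {x 2 ^ P}

end HilbertBurchExamples


section HilbertBurchExamplesSquared

variable {R : Type} [CommRing R]

/-- The matrix `X'_p`: `X_p` with each entry squared. -/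
def Xmat' (x : Fin 3 → R) (P : ℕ) : Matrix (Fin (P + 1)) (Fin P) R :=
  Matrix.of fun l c =>
    if (l : ℕ) = (c : ℕ) then x 0 ^ 2
    else if (l : ℕ) = (c : ℕ) + 1 then x 1 ^ 2
    else if (l : ℕ) = (c : ℕ) + 2 then x 2 ^ 2
    else 0

/-- The signed maximal minors of `X'_p`. -/
def minorDelta' (x : Fin 3 → R) (P : ℕ) (i : Fin (P + 1)) : R :=
  (-1 : R) ^ (i : ℕ) * ((Xmat' x P).submatrix i.succAbove id).det

end HilbertBurchExamplesSquared

/-!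
The signed maximal minors of `X` are resolved by the Hilbert-Burch complex, and the cone of
multiplication by `z` on it resolves the quotient by the minors and `z`. This cone is a DG algebra
whose only products with unit coefficients are those with the generator of the cone, which gives
the class `H(p, p - 1)`.

Trimming the generators indexed by `σ` glues one copy of the Koszul complex for each of them along
the comparison map `Q₁`. The resulting resolution need not be minimal: each unit entry of `Q₁`
cancels a generator of degree `1` of a Koszul complex against one of `F₂`. After this Gaussian
elimination, the products of the trimmed complex agree with the old ones modulo `𝔪`, since the
comparison maps send products of `F` into `𝔪` times the Koszul complexes. Hence trimming minors
removes generators from the table of unit products, whereas trimming `z` removes the generator that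
takes part in all of them, and nothing but a Golod ring remains.

For the banded matrix `X_p` the unit entries of `Q₁` lie in the columns that meet a row of `σ`, and
`rank (Q₁ ⊗ k)` is the number of these columns. Squaring the entries leaves no units in `Q₁`.
-/

namespace HilbertBurchTrim

open Function Matrix

section SmulTop

variable {R M N : Type*} [CommRing R] [AddCommGroup M] [AddCommGroup N] [Module R M] [Module R N]
  {I : Ideal R}

theorem smul_mem_smul_top {a : R} (ha : a ∈ I) (v : M) : a • v ∈ I • (⊤ : Submodule R M) :=
  Submodule.smul_mem_smul ha trivial

theorem map_mem_smul_top (f : M →ₗ[R] N) {v : M} (hv : v ∈ I • (⊤ : Submodule R M)) :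
    f v ∈ I • (⊤ : Submodule R N) :=
  Submodule.smul_mono le_rfl le_top (Submodule.map_smul'' I ⊤ f ▸ Submodule.mem_map_of_mem hv)

theorem map_modEq (f : M →ₗ[R] N) {v w : M} (h : v ≡ w [SMOD I • (⊤ : Submodule R M)]) :
    f v ≡ f w [SMOD I • (⊤ : Submodule R N)] :=
  SModEq.sub_mem.2 (map_sub f v w ▸ map_mem_smul_top f (SModEq.sub_mem.1 h))

theorem map₂_modEq {P : Type*} [AddCommGroup P] [Module R P] (f : M →ₗ[R] N →ₗ[R] P) {v v' : M}
    {w w' : N} (hv : v ≡ v' [SMOD I • (⊤ : Submodule R M)])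
    (hw : w ≡ w' [SMOD I • (⊤ : Submodule R N)]) :
    f v w ≡ f v' w' [SMOD I • (⊤ : Submodule R P)] :=
  (map_modEq (f.flip w) hv).trans (map_modEq (f v') hw)

theorem map_mem_mul_smul_top {K : Ideal R} (f : M →ₗ[R] N)
    (hf : ∀ v, f v ∈ K • (⊤ : Submodule R N)) {v : M} (hv : v ∈ I • (⊤ : Submodule R M)) :
    f v ∈ (I * K) • (⊤ : Submodule R N) := by
  have h := Submodule.mem_map_of_mem (f := f) hv
  rw [Submodule.map_smul''] at h
  rw [mul_smul]
  refine Submodule.smul_mono le_rfl ?_ h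
  rintro _ ⟨u, -, rfl⟩
  exact hf u

theorem mem_smul_top_pi_iff {ι : Type*} [Finite ι] {v : ι → R} :
    v ∈ I • (⊤ : Submodule R (ι → R)) ↔ ∀ i, v i ∈ I := by
  classical
  have := Fintype.ofFinite ι
  refine ⟨fun hv i => by simpa using map_mem_smul_top (LinearMap.proj i : (ι → R) →ₗ[R] R) hv,
    fun hv => ?_⟩
  rw [pi_eq_sum_univ' v]
  exact sum_mem fun i _ => smul_mem_smul_top (hv i) _

theorem mulVec_apply_mem {m ι : Type*} [Fintype ι] {A : Matrix m ι R} {w : ι → R} {i : m}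
    (h : ∀ j, A i j * w j ∈ I) : (A *ᵥ w) i ∈ I :=
  show ∑ j, A i j * w j ∈ I from sum_mem fun j _ => h j

theorem mem_smul_top_prod_iff {v : M × N} :
    v ∈ I • (⊤ : Submodule R (M × N)) ↔
      v.1 ∈ I • (⊤ : Submodule R M) ∧ v.2 ∈ I • (⊤ : Submodule R N) := by
  refine ⟨fun h => ⟨map_mem_smul_top (.fst R M N) h, map_mem_smul_top (.snd R M N) h⟩, fun h => ?_⟩
  rw [← Prod.fst_add_snd v]
  exact add_mem (map_mem_smul_top (.inl R M N) h.1) (map_mem_smul_top (.inr R M N) h.2)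

end SmulTop

section Regularity

variable {R : Type*} [CommRing R]

/-- `a, b` is a weakly regular sequence (the quotient `R ⧸ (a, b)` may vanish), in elementwise
form. -/
structure IsRegularPair (a b : R) : Prop where
  mem_nonZeroDivisors : a ∈ nonZeroDivisors R
  dvd_of_dvd_mul : ∀ {c}, a ∣ b * c → a ∣ c

/-- `x 0, x 1, x 2` is a weakly regular sequence, in elementwise form. -/
structure IsRegularTriple (x : Fin 3 → R) : Prop extends IsRegularPair (x 0) (x 1) where
  mem_span_of_mul_mem : ∀ {c}, x 2 * c ∈ Ideal.span {x 0, x 1} → c ∈ Ideal.span {x 0, x 1}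

theorem mem_ofList_take_of_mul_mem {rs : List R} (h : RingTheory.Sequence.IsWeaklyRegular R rs)
    {i : ℕ} (hi : i < rs.length) {c : R} (hc : rs[i] * c ∈ Ideal.ofList (rs.take i)) :
    c ∈ Ideal.ofList (rs.take i) := by
  have hreg := isSMulRegular_iff_right_eq_zero_of_smul.1 (h.regular_mod_prev i hi)
  have hmk := hreg (Submodule.Quotient.mk c)
    (by rw [← Submodule.Quotient.mk_smul, Submodule.Quotient.mk_eq_zero]; simpa using hc)
  simpa using (Submodule.Quotient.mk_eq_zero _).1 hmk

theorem IsRegularTriple.of_isWeaklyRegular {x : Fin 3 → R}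
    (h : RingTheory.Sequence.IsWeaklyRegular R [x 0, x 1, x 2]) : IsRegularTriple x where
  mem_nonZeroDivisors := mem_nonZeroDivisors_iff_left.2 fun c hc => by
    simpa using mem_ofList_take_of_mul_mem h (i := 0) (by simp) (c := c) (by simpa using hc)
  dvd_of_dvd_mul {c} hc := by
    simpa [Ideal.mem_span_singleton] using mem_ofList_take_of_mul_mem h (i := 1) (by simp) (c := c)
      (by simpa [Ideal.mem_span_singleton] using hc)
  mem_span_of_mul_mem {c} hc := by
    simpa [Ideal.span_insert] using mem_ofList_take_of_mul_mem h (i := 2) (by simp) (c := c)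
      (by simpa [Ideal.span_insert] using hc)

theorem IsRegularTriple.isRegularPair_mk {x : Fin 3 → R} (h : IsRegularTriple x) :
    IsRegularPair (Ideal.Quotient.mk (Ideal.span {x 0}) (x 1))
      (Ideal.Quotient.mk (Ideal.span {x 0}) (x 2)) where
  mem_nonZeroDivisors := mem_nonZeroDivisors_iff_left.2 fun c hc => by
    obtain ⟨c, rfl⟩ := Ideal.Quotient.mk_surjective c
    rw [← map_mul, Ideal.Quotient.eq_zero_iff_dvd] at hc
    exact (Ideal.Quotient.eq_zero_iff_dvd _ _).2 (h.dvd_of_dvd_mul hc)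
  dvd_of_dvd_mul {c} hc := by
    have mk_dvd_mk_iff (b c : R) :
        Ideal.Quotient.mk (Ideal.span {x 0}) b ∣ Ideal.Quotient.mk (Ideal.span {x 0}) c ↔
          c ∈ Ideal.span {x 0, b} := by
      rw [← Ideal.mem_span_singleton, ← Set.image_singleton (f := Ideal.Quotient.mk _),
        ← Ideal.map_span, Ideal.mem_quotient_iff_mem_sup, ← Ideal.span_union, Set.union_comm]
      rfl
    obtain ⟨c, rfl⟩ := Ideal.Quotient.mk_surjective c
    rw [← map_mul, mk_dvd_mk_iff] at hc
    exact (mk_dvd_mk_iff _ _).2 (h.mem_span_of_mul_mem hc)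

theorem IsRegularPair.sq_sq {a b : R} (h : IsRegularPair a b) : IsRegularPair (a ^ 2) (b ^ 2) where
  mem_nonZeroDivisors := pow_mem h.mem_nonZeroDivisors 2
  dvd_of_dvd_mul {c} hc := by
    have dvd_of_sq {c} (hc : a ∣ b ^ 2 * c) : a ∣ c :=
      h.dvd_of_dvd_mul (h.dvd_of_dvd_mul (by rwa [← mul_assoc, ← sq]))
    obtain ⟨d, rfl⟩ := dvd_of_sq (dvd_of_mul_right_dvd (sq a ▸ hc))
    rw [mul_left_comm, sq a, dvd_cancel_left_mem_nonZeroDivisors h.mem_nonZeroDivisors] at hc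
    rw [sq]
    exact mul_dvd_mul_left a (dvd_of_sq hc)

end Regularity

section Koszul

theorem fibers_ext {B C R : Type*} {k k' : B × C → R}
    (h : ∀ b, (fun l => k (b, l)) = fun l => k' (b, l)) : k = k' :=
  funext fun ⟨b, l⟩ => congrFun (h b) l

variable {R : Type*} [CommRing R] {x : Fin 3 → R}

theorem exists_cross_eq (hx : IsRegularTriple x) {k : Fin 3 → R} (hk : x ⬝ᵥ k = 0) :
    ∃ h, x ⨯₃ h = k := by
  simp only [dotProduct, Fin.sum_univ_three] at hk
  obtain ⟨a, b, hab⟩ := Ideal.mem_span_pair.1 (hx.mem_span_of_mul_mem (c := k 2)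
    (Ideal.mem_span_pair.2 ⟨-k 0, -k 1, by linear_combination -hk⟩))
  obtain ⟨c, hc⟩ := hx.dvd_of_dvd_mul (c := k 1 + b * x 2)
    ⟨-(k 0 + a * x 2), by linear_combination hk + x 2 * hab⟩
  have hac : k 0 + a * x 2 + c * x 1 = 0 :=
    (mul_left_mem_nonZeroDivisors_eq_zero_iff hx.mem_nonZeroDivisors).1
      (by linear_combination hk + x 2 * hab - x 1 * hc)
  refine ⟨![-b, a, -c], ?_⟩
  ext l
  fin_cases l <;> simp only [cross_apply, Fin.zero_eta, Fin.mk_one, Fin.reduceFinMk, cons_val]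
  · linear_combination -hac
  · linear_combination -hc
  · linear_combination hab

theorem exists_smul_eq_of_cross_eq_zero (hx : IsRegularTriple x) {k : Fin 3 → R}
    (hk : x ⨯₃ k = 0) : ∃ r : R, r • x = k := by
  simp only [cross_apply] at hk
  have h1 := congrFun hk 1
  have h2 := congrFun hk 2
  simp only [cons_val, Pi.zero_apply] at h1 h2
  obtain ⟨r, hr⟩ := hx.dvd_of_dvd_mul (c := k 0) ⟨k 1, by linear_combination -h2⟩
  have cancel {c : R} := (mul_left_mem_nonZeroDivisors_eq_zero_iff (x := c)
    hx.mem_nonZeroDivisors).1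
  refine ⟨r, ?_⟩
  ext l
  fin_cases l <;> simp only [Fin.zero_eta, Fin.mk_one, Fin.reduceFinMk, Pi.smul_apply, smul_eq_mul]
  · linear_combination -hr
  · exact sub_eq_zero.1 (cancel (by linear_combination -x 1 * hr - h2))
  · exact sub_eq_zero.1 (cancel (by linear_combination -x 2 * hr + h1))

theorem mem_span_range_mul_iff {ι : Type*} [Fintype ι] {x : ι → R} {J : Ideal R} {r : R} :
    r ∈ Ideal.span (Set.range x) * J ↔
      ∃ b ∈ J • (⊤ : Submodule R (ι → R)), x ⬝ᵥ b = r := by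
  rw [mul_comm, ← smul_eq_mul, Ideal.span, Submodule.mem_ideal_smul_span_iff_exists_sum]
  simp only [mem_smul_top_pi_iff]
  constructor
  · rintro ⟨a, ha, rfl⟩
    exact ⟨a, ha, by simp [dotProduct, Finsupp.sum_fintype, mul_comm]⟩
  · rintro ⟨b, hb, rfl⟩
    exact ⟨Finsupp.equivFunOnFinite.symm b, hb, by
      simp [dotProduct, Finsupp.sum_fintype, mul_comm]⟩

theorem cross_mem_smul_top {I J : Ideal R} {x h : Fin 3 → R} (hx : ∀ l, x l ∈ I)
    (hh : h ∈ J • (⊤ : Submodule R (Fin 3 → R))) :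
    x ⨯₃ h ∈ (I * J) • (⊤ : Submodule R (Fin 3 → R)) := by
  simp only [mem_smul_top_pi_iff] at hh ⊢
  intro l
  fin_cases l <;> exact sub_mem (Ideal.mul_mem_mul (hx _) (hh _)) (Ideal.mul_mem_mul (hx _) (hh _))

theorem mem_span_range (x : Fin 3 → R) (l : Fin 3) : x l ∈ Ideal.span (Set.range x) :=
  Ideal.subset_span ⟨l, rfl⟩

theorem mem_smul_top_of_dotProduct_eq_zero (hx : IsRegularTriple x) {k : Fin 3 → R}
    (hk : x ⬝ᵥ k = 0) : k ∈ Ideal.span (Set.range x) • (⊤ : Submodule R (Fin 3 → R)) := by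
  obtain ⟨h, rfl⟩ := exists_cross_eq hx hk
  simpa using cross_mem_smul_top (J := ⊤) (mem_span_range x) (by rw [Submodule.top_smul]; trivial)

theorem mem_smul_top_of_dotProduct_mem_sq (hx : IsRegularTriple x) {k : Fin 3 → R}
    (hk : x ⬝ᵥ k ∈ Ideal.span (Set.range x) ^ 2) :
    k ∈ Ideal.span (Set.range x) • (⊤ : Submodule R (Fin 3 → R)) := by
  obtain ⟨b, hb, hbk⟩ := mem_span_range_mul_iff.1 (sq (Ideal.span (Set.range x)) ▸ hk)
  have hkb := mem_smul_top_of_dotProduct_eq_zero hx (k := k - b)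
    (by rw [dotProduct_sub, hbk, sub_self])
  simpa using add_mem hkb hb

theorem exists_cross_eq_of_mem_sq (hx : IsRegularTriple x) {k : Fin 3 → R} (hk : x ⬝ᵥ k = 0)
    (hk2 : k ∈ Ideal.span (Set.range x) ^ 2 • (⊤ : Submodule R (Fin 3 → R))) :
    ∃ h ∈ Ideal.span (Set.range x) • (⊤ : Submodule R (Fin 3 → R)), x ⨯₃ h = k := by
  obtain ⟨h, rfl⟩ := exists_cross_eq hx hk
  refine ⟨h, ?_, rfl⟩
  simp only [mem_smul_top_pi_iff, cross_apply] at hk2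
  have h0 := mem_smul_top_pi_iff.1 <| mem_smul_top_of_dotProduct_mem_sq hx (k := ![0, h 2, -h 1])
    (by simpa [dotProduct, Fin.sum_univ_three, sub_eq_add_neg] using hk2 0)
  have h1 := mem_smul_top_pi_iff.1 <| mem_smul_top_of_dotProduct_mem_sq hx (k := ![-h 2, 0, h 0])
    (by simpa [dotProduct, Fin.sum_univ_three, sub_eq_neg_add] using hk2 1)
  rw [mem_smul_top_pi_iff]
  intro l
  fin_cases l
  · simpa using h1 2
  · simpa using h0 2
  · simpa using h0 1

theorem mem_of_smul_mem_sq (hx : IsRegularTriple x) {r : R}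
    (hr : r • x ∈ Ideal.span (Set.range x) ^ 2 • (⊤ : Submodule R (Fin 3 → R))) :
    r ∈ Ideal.span (Set.range x) := by
  simpa using mem_smul_top_pi_iff.1 (mem_smul_top_of_dotProduct_mem_sq hx (k := ![r, 0, 0])
    (by simpa [dotProduct, Fin.sum_univ_three, mul_comm] using mem_smul_top_pi_iff.1 hr 0)) 0

variable (x) (B : Type*)

/-- The first differential of a direct sum, indexed by `B`, of copies of the Koszul complex on
`x`. -/
def kosz₁ : (B × Fin 3 → R) →ₗ[R] (B → R) :=
  (dotProductBilin R R x).compLeft B ∘ₗ (LinearEquiv.curry R R B (Fin 3)).toLinearMap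

/-- The second differential of a direct sum, indexed by `B`, of copies of the Koszul complex on
`x`; the middle modules are identified by means of the cross product. -/
def kosz₂ : (B × Fin 3 → R) →ₗ[R] (B × Fin 3 → R) :=
  (LinearEquiv.curry R R B (Fin 3)).symm.toLinearMap ∘ₗ (crossProduct x).compLeft B ∘ₗ
    (LinearEquiv.curry R R B (Fin 3)).toLinearMap

/-- The third differential of a direct sum, indexed by `B`, of copies of the Koszul complex on
`x`. -/
def kosz₃ : (B → R) →ₗ[R] (B × Fin 3 → R) :=
  (LinearEquiv.curry R R B (Fin 3)).symm.toLinearMap ∘ₗ (LinearMap.toSpanSingleton R _ x).compLeft B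

variable {B}

theorem kosz₁_apply (k : B × Fin 3 → R) (b : B) : kosz₁ x B k b = x ⬝ᵥ fun l => k (b, l) := rfl

theorem kosz₂_apply (k : B × Fin 3 → R) (b : B) :
    (fun l => kosz₂ x B k (b, l)) = x ⨯₃ fun l => k (b, l) := rfl

theorem kosz₃_apply (r : B → R) (b : B) : (fun l => kosz₃ x B r (b, l)) = r b • x := rfl

@[simp]
theorem kosz₁_kosz₂ (k : B × Fin 3 → R) : kosz₁ x B (kosz₂ x B k) = 0 := by
  ext b
  rw [kosz₁_apply, kosz₂_apply, dot_self_cross, Pi.zero_apply]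

@[simp]
theorem kosz₂_kosz₃ (r : B → R) : kosz₂ x B (kosz₃ x B r) = 0 :=
  fibers_ext fun b => by rw [kosz₂_apply, kosz₃_apply, map_smul, cross_self, smul_zero]; rfl

variable {x}

theorem kosz₂_exact_kosz₁ (hx : IsRegularTriple x) : Exact (kosz₂ x B) (kosz₁ x B) := by
  refine LinearMap.exact_iff.2 (le_antisymm (fun k hk => ?_) ?_)
  · choose h hh using fun b => exists_cross_eq hx (k := fun l => k (b, l)) (congrFun hk b)
    exact ⟨uncurry h, fibers_ext fun b => by rw [kosz₂_apply]; exact hh b⟩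
  · rintro _ ⟨k, rfl⟩
    exact kosz₁_kosz₂ x k

theorem kosz₃_exact_kosz₂ (hx : IsRegularTriple x) : Exact (kosz₃ x B) (kosz₂ x B) := by
  refine LinearMap.exact_iff.2 (le_antisymm (fun k hk => ?_) ?_)
  · choose r hr using fun b => exists_smul_eq_of_cross_eq_zero hx (k := fun l => k (b, l))
      (by rw [← kosz₂_apply, show kosz₂ x B k = 0 from hk]; rfl)
    exact ⟨r, fibers_ext fun b => by rw [kosz₃_apply, hr]⟩
  · rintro _ ⟨r, rfl⟩
    exact kosz₂_kosz₃ x r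

theorem kosz₃_injective (hx : IsRegularTriple x) : Injective (kosz₃ x B) := by
  refine (injective_iff_map_eq_zero _).2 fun r hr => funext fun b => ?_
  have hb : r b * x 0 = 0 := congrFun hr (b, 0)
  exact (mul_right_mem_nonZeroDivisors_eq_zero_iff hx.mem_nonZeroDivisors).1 hb

variable [Finite B]

theorem mem_smul_top_fibers_iff {I : Ideal R} {k : B × Fin 3 → R} :
    k ∈ I • (⊤ : Submodule R (B × Fin 3 → R)) ↔
      ∀ b, (fun l => k (b, l)) ∈ I • (⊤ : Submodule R (Fin 3 → R)) := by
  simp only [mem_smul_top_pi_iff, Prod.forall]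

theorem exists_kosz₁_eq {J : Ideal R} {v : B → R}
    (hv : v ∈ (Ideal.span (Set.range x) * J) • (⊤ : Submodule R (B → R))) :
    ∃ k ∈ J • (⊤ : Submodule R (B × Fin 3 → R)), kosz₁ x B k = v := by
  choose k hkJ hk using fun b => mem_span_range_mul_iff.1 (mem_smul_top_pi_iff.1 hv b)
  exact ⟨uncurry k, mem_smul_top_fibers_iff.2 hkJ, funext hk⟩

theorem exists_kosz₂_eq_of_mem_sq (hx : IsRegularTriple x) {k : B × Fin 3 → R}
    (hk : kosz₁ x B k = 0)
    (hk2 : k ∈ Ideal.span (Set.range x) ^ 2 • (⊤ : Submodule R (B × Fin 3 → R))) :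
    ∃ h ∈ Ideal.span (Set.range x) • (⊤ : Submodule R (B × Fin 3 → R)), kosz₂ x B h = k := by
  choose h hI hh using fun b => exists_cross_eq_of_mem_sq hx (congrFun hk b)
    (mem_smul_top_fibers_iff.1 hk2 b)
  exact ⟨uncurry h, mem_smul_top_fibers_iff.2 hI, fibers_ext hh⟩

theorem kosz₁_mem (k : B × Fin 3 → R) :
    kosz₁ x B k ∈ Ideal.span (Set.range x) • (⊤ : Submodule R (B → R)) :=
  mem_smul_top_pi_iff.2 fun b => show ∑ l, x l * k (b, l) ∈ _ from
    sum_mem fun l _ => Ideal.mul_mem_right _ _ (mem_span_range x l)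

variable (x B) in
theorem range_kosz₁ : LinearMap.range (kosz₁ x B) =
    Ideal.span (Set.range x) • (⊤ : Submodule R (B → R)) := by
  refine le_antisymm ?_ fun v hv => ?_
  · rintro _ ⟨k, rfl⟩
    exact kosz₁_mem k
  · obtain ⟨k, -, hk⟩ := exists_kosz₁_eq (J := ⊤) (v := v) (by simpa using hv)
    exact ⟨k, hk⟩

theorem kosz₂_mem (k : B × Fin 3 → R) :
    kosz₂ x B k ∈ Ideal.span (Set.range x) • (⊤ : Submodule R (B × Fin 3 → R)) :=
  mem_smul_top_fibers_iff.2 fun b => by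
    rw [kosz₂_apply]
    simpa using cross_mem_smul_top (J := ⊤) (mem_span_range x) (by rw [Submodule.top_smul]; trivial)

theorem kosz₃_mem (r : B → R) :
    kosz₃ x B r ∈ Ideal.span (Set.range x) • (⊤ : Submodule R (B × Fin 3 → R)) :=
  mem_smul_top_pi_iff.2 fun ⟨b, l⟩ => Ideal.mul_mem_left _ (r b) (mem_span_range x l)

theorem mem_of_kosz₃_mem_sq (hx : IsRegularTriple x) {r : B → R}
    (hr : kosz₃ x B r ∈ Ideal.span (Set.range x) ^ 2 • (⊤ : Submodule R (B × Fin 3 → R))) :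
    r ∈ Ideal.span (Set.range x) • (⊤ : Submodule R (B → R)) :=
  mem_smul_top_pi_iff.2 fun b => mem_of_smul_mem_sq hx (mem_smul_top_fibers_iff.1 hr b)

end Koszul

section Lifting

variable {R M N P : Type*} [CommRing R] [AddCommGroup M] [AddCommGroup N] [AddCommGroup P]
  [Module R M] [Module R N] [Module R P] (S : Submodule R N) (g : N →ₗ[R] P)

theorem exists_lift_of_mem_map [Module.Projective R M] (f : M →ₗ[R] P) (hf : ∀ v, f v ∈ S.map g) :
    ∃ m : M →ₗ[R] N, (∀ v, m v ∈ S) ∧ ∀ v, g (m v) = f v := by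
  obtain ⟨m, hm⟩ := Module.projective_lifting_property (g.submoduleMap S)
    (f.codRestrict (S.map g) hf) (g.submoduleMap_surjective S)
  exact ⟨S.subtype ∘ₗ m, fun v => (m v).2, fun v => congrArg Subtype.val (LinearMap.congr_fun hm v)⟩

theorem exists_isAlt_lift_of_mem_map [Module.Free R M] (f : M →ₗ[R] M →ₗ[R] P) (hf : f.IsAlt)
    (hfS : ∀ a b, f a b ∈ S.map g) :
    ∃ m : M →ₗ[R] M →ₗ[R] N, m.IsAlt ∧ (∀ a b, m a b ∈ S) ∧ ∀ a b, g (m a b) = f a b := by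
  classical
  let e := Module.Free.chooseBasis R M
  let := linearOrderOfSTO (WellOrderingRel (α := Module.Free.ChooseBasisIndex R M))
  choose w hwS hw using hfS
  let u : M →ₗ[R] M →ₗ[R] S := e.constr R fun i => e.constr R fun j =>
    if i < j then ⟨w (e i) (e j), hwS _ _⟩ else 0
  refine ⟨(u - u.flip).compr₂ S.subtype, fun v => ?_, fun a b => (u a b - u b a).2, fun a b => ?_⟩
  · simp
  · suffices ((u - u.flip).compr₂ S.subtype).compr₂ g = f from LinearMap.congr_fun₂ this a b
    refine LinearMap.ext_basis e e fun i j => ?_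
    rcases lt_trichotomy i j with hij | rfl | hij
    · simp [u, hij, hij.not_gt, hw]
    · simp [hf (e i)]
    · simp [u, hij, hij.not_gt, hw, hf.neg]

end Lifting

/-- A free resolution `0 → M₃ → M₂ → M₁ → R` of `R ⧸ J` (freeness of the modules is not part of
the structure) with the degree `(1, 1)` part of a graded commutative DG-algebra structure. The
degree `(1, 2)` part is determined by the Leibniz rule, see `DGResolution.mul₁₂`. -/
structure DGResolution {R : Type*} [CommRing R] (J : Ideal R) (M₁ M₂ M₃ : Type*)
    [AddCommGroup M₁] [AddCommGroup M₂] [AddCommGroup M₃]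
    [Module R M₁] [Module R M₂] [Module R M₃] where
  d₁ : M₁ →ₗ[R] R
  d₂ : M₂ →ₗ[R] M₁
  d₃ : M₃ →ₗ[R] M₂
  mul : M₁ →ₗ[R] M₁ →ₗ[R] M₂
  range_d₁ : LinearMap.range d₁ = J
  exact₁ : Exact d₂ d₁
  exact₂ : Exact d₃ d₂
  injective_d₃ : Injective d₃
  d₂_mul : ∀ a b, d₂ (mul a b) = d₁ a • b - d₁ b • a
  isAlt_mul : mul.IsAlt

namespace DGResolution

variable {R : Type*} [CommRing R] {J : Ideal R} {M₁ M₂ M₃ : Type*}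
  [AddCommGroup M₁] [AddCommGroup M₂] [AddCommGroup M₃] [Module R M₁] [Module R M₂] [Module R M₃]

section Product

variable (D : DGResolution J M₁ M₂ M₃)

@[simp]
theorem d₁_d₂ (v : M₂) : D.d₁ (D.d₂ v) = 0 := D.exact₁.apply_apply_eq_zero v

@[simp]
theorem d₂_d₃ (w : M₃) : D.d₂ (D.d₃ w) = 0 := D.exact₂.apply_apply_eq_zero w

theorem exists_d₃_eq_leibniz (a : M₁) (z : M₂) :
    ∃ w, D.d₃ w = D.d₁ a • z - D.mul a (D.d₂ z) :=
  (D.exact₂ _).1 (by rw [map_sub, D.d₂_mul, map_smul, d₁_d₂, zero_smul, sub_zero, sub_self])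

theorem exists_leibniz_product :
    ∃ m : M₁ →ₗ[R] M₂ →ₗ[R] M₃, ∀ a z, D.d₃ (m a z) = D.d₁ a • z - D.mul a (D.d₂ z) := by
  choose m hm using D.exists_d₃_eq_leibniz
  refine ⟨LinearMap.mk₂ R m ?_ ?_ ?_ ?_, hm⟩ <;> intros <;> apply D.injective_d₃ <;>
    simp only [hm, map_add, map_smul, LinearMap.add_apply, LinearMap.smul_apply, smul_eq_mul] <;>
    module

/-- The product of degrees `1` and `2`, the unique one satisfying the Leibniz rule. -/
noncomputable def mul₁₂ : M₁ →ₗ[R] M₂ →ₗ[R] M₃ := D.exists_leibniz_product.choose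

theorem d₃_mul₁₂ (a : M₁) (z : M₂) : D.d₃ (D.mul₁₂ a z) = D.d₁ a • z - D.mul a (D.d₂ z) :=
  D.exists_leibniz_product.choose_spec a z

theorem mul₁₂_eq_iff {a : M₁} {z : M₂} {w : M₃} :
    D.mul₁₂ a z = w ↔ D.d₃ w = D.d₁ a • z - D.mul a (D.d₂ z) := by
  rw [← D.injective_d₃.eq_iff, d₃_mul₁₂, eq_comm]

theorem mul₁₂_mul (a b c : M₁) : D.mul₁₂ c (D.mul a b) = D.mul₁₂ a (D.mul b c) := by
  rw [mul₁₂_eq_iff, d₃_mul₁₂, d₂_mul, d₂_mul, map_sub, map_sub, map_smul, map_smul, map_smul,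
    map_smul, ← D.isAlt_mul.neg c b, ← D.isAlt_mul.neg a c]
  module

end Product

section Congr

variable {N₁ N₂ N₃ : Type*} [AddCommGroup N₁] [AddCommGroup N₂] [AddCommGroup N₃]
  [Module R N₁] [Module R N₂] [Module R N₃] (D : DGResolution J M₁ M₂ M₃)
  (e₁ : M₁ ≃ₗ[R] N₁) (e₂ : M₂ ≃ₗ[R] N₂) (e₃ : M₃ ≃ₗ[R] N₃)

/-- Transport of a resolution along linear equivalences. -/
def congr : DGResolution J N₁ N₂ N₃ where
  d₁ := D.d₁ ∘ₗ e₁.symm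
  d₂ := e₁ ∘ₗ D.d₂ ∘ₗ e₂.symm
  d₃ := e₂ ∘ₗ D.d₃ ∘ₗ e₃.symm
  mul := (D.mul.compl₁₂ e₁.symm.toLinearMap e₁.symm.toLinearMap).compr₂ e₂.toLinearMap
  range_d₁ := by rw [LinearMap.range_comp_of_range_eq_top _ e₁.symm.range, D.range_d₁]
  exact₁ v := by
    simp only [LinearMap.comp_apply, LinearEquiv.coe_coe, D.exact₁ (e₁.symm v), Set.mem_range,
      e₂.symm.surjective.exists, LinearEquiv.eq_symm_apply]
  exact₂ v := by
    simp only [LinearMap.comp_apply, LinearEquiv.coe_coe, LinearEquiv.map_eq_zero_iff,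
      D.exact₂ (e₂.symm v), Set.mem_range, e₃.symm.surjective.exists, LinearEquiv.eq_symm_apply]
  injective_d₃ := e₂.injective.comp (D.injective_d₃.comp e₃.symm.injective)
  d₂_mul a b := by simp [D.d₂_mul]
  isAlt_mul a := by simp [D.isAlt_mul _]

theorem congr_mul (a b : M₁) : (D.congr e₁ e₂ e₃).mul (e₁ a) (e₁ b) = e₂ (D.mul a b) := by
  simp [congr]

theorem congr_mul₁₂ (a : M₁) (z : M₂) :
    (D.congr e₁ e₂ e₃).mul₁₂ (e₁ a) (e₂ z) = e₃ (D.mul₁₂ a z) := by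
  simp [mul₁₂_eq_iff, congr, d₃_mul₁₂]

end Congr

section Cancel

variable {N₁ N₂ C : Type*} [AddCommGroup N₁] [AddCommGroup N₂] [AddCommGroup C]
  [Module R N₁] [Module R N₂] [Module R C] (T : DGResolution J (N₁ × C) (N₂ × C) M₃)

/-- The embedding of `N₂` onto the part of `N₂ × C` that `T.d₂` maps into `N₁`, provided that
`T.d₂` induces the identity of `C`. -/
def cancelIncl : N₂ →ₗ[R] N₂ × C :=
  LinearMap.prod LinearMap.id (-(LinearMap.snd R N₁ C ∘ₗ T.d₂ ∘ₗ LinearMap.inl R N₂ C))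

theorem fst_cancelIncl (v : N₂) : (T.cancelIncl v).1 = v := rfl

theorem d₂_mul_inl_snd (a b : N₁) : (T.d₂ (T.mul (a, 0) (b, 0))).2 = 0 := by simp [T.d₂_mul]

variable (h : ∀ c, (T.d₂ (0, c)).2 = c)

include h

theorem d₂_snd (u : N₂ × C) : (T.d₂ u).2 = (T.d₂ (u.1, 0)).2 + u.2 := by
  conv_lhs => rw [← Prod.fst_add_snd u, map_add, Prod.snd_add, h]

theorem d₂_cancelIncl (v : N₂) : T.d₂ (T.cancelIncl v) = ((T.d₂ (T.cancelIncl v)).1, 0) :=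
  Prod.ext rfl (by rw [T.d₂_snd h]; simp [cancelIncl])

theorem cancelIncl_fst {u : N₂ × C} (hu : (T.d₂ u).2 = 0) : T.cancelIncl u.1 = u :=
  Prod.ext rfl (neg_eq_of_add_eq_zero_right (by rwa [T.d₂_snd h] at hu))

theorem cancelIncl_d₃_fst (w : M₃) : T.cancelIncl (T.d₃ w).1 = T.d₃ w :=
  T.cancelIncl_fst h (by rw [d₂_d₃, Prod.snd_zero])

/-- Gaussian elimination: a summand `C` on which `d₂` restricts to the identity can be removed
from the modules in degrees `1` and `2`. -/
def cancel : DGResolution J N₁ N₂ M₃ where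
  d₁ := T.d₁ ∘ₗ LinearMap.inl R N₁ C
  d₂ := LinearMap.fst R N₁ C ∘ₗ T.d₂ ∘ₗ T.cancelIncl
  d₃ := LinearMap.fst R N₂ C ∘ₗ T.d₃
  mul := (T.mul.compl₁₂ (LinearMap.inl R N₁ C) (LinearMap.inl R N₁ C)).compr₂
    (LinearMap.fst R N₂ C)
  range_d₁ := by
    refine (le_antisymm (LinearMap.range_comp_le_range _ _) ?_).trans T.range_d₁
    rintro _ ⟨⟨a, c⟩, rfl⟩
    have hc : T.d₂ (0, c) = ((T.d₂ (0, c)).1, c) := Prod.ext rfl (h c)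
    refine ⟨a - (T.d₂ (0, c)).1, ?_⟩
    rw [← sub_zero (T.d₁ (a, c)), ← T.d₁_d₂ (0, c), hc, ← map_sub]
    simp
  exact₁ a := by
    refine ⟨fun ha => ?_, ?_⟩
    · obtain ⟨u, hu⟩ := (T.exact₁ (a, 0)).1 ha
      refine ⟨u.1, ?_⟩
      simp [T.cancelIncl_fst h (show (T.d₂ u).2 = 0 by rw [hu]), hu]
    · rintro ⟨v, rfl⟩
      simp [← T.d₂_cancelIncl h v]
  exact₂ v := by
    refine ⟨fun hv => ?_, ?_⟩
    · obtain ⟨w, hw⟩ := (T.exact₂ (T.cancelIncl v)).1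
        (by rw [T.d₂_cancelIncl h]; exact Prod.ext hv rfl)
      exact ⟨w, congrArg Prod.fst hw⟩
    · rintro ⟨w, rfl⟩
      simp [T.cancelIncl_d₃_fst h]
  injective_d₃ := (injective_iff_map_eq_zero _).2 fun w (hw : (T.d₃ w).1 = 0) =>
    T.injective_d₃ (by rw [← T.cancelIncl_d₃_fst h, hw, map_zero, map_zero])
  d₂_mul a b := by
    simp [T.cancelIncl_fst h (T.d₂_mul_inl_snd a b), T.d₂_mul]
  isAlt_mul a := by simp [T.isAlt_mul _]

theorem cancel_mul₁₂ (a : N₁) (z : N₂) :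
    (T.cancel h).mul₁₂ a z = T.mul₁₂ (a, 0) (T.cancelIncl z) := by
  rw [mul₁₂_eq_iff]
  have hz := T.d₂_cancelIncl h z
  simp only [cancel, LinearMap.comp_apply, LinearMap.fst_apply, d₃_mul₁₂, Prod.fst_sub,
    Prod.smul_fst, LinearMap.inl_apply, LinearMap.compr₂_apply, LinearMap.compl₁₂_apply, ← hz,
    fst_cancelIncl]

end Cancel

end DGResolution

section Enumeration

theorem reindex_equivFun_apply {R ι M : Type*} [CommRing R] [AddCommGroup M] [Module R M] {n : ℕ}
    (b : Module.Basis ι R M) (ε : ι ≃ Fin n) (t : ι) :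
    (b.reindex ε).equivFun (b t) = Pi.single (ε t) 1 := by
  ext j
  simpa [Pi.single_apply, eq_comm] using (b.reindex ε).equivFun_self (ε t) j

variable (α β γ : Type*) [Fintype α] [Fintype β] [Fintype γ]

/-- The enumeration of a disjoint union of three types, block by block. -/
noncomputable def sumEnum :
    α ⊕ β ⊕ γ ≃ Fin (Fintype.card α + (Fintype.card β + Fintype.card γ)) :=
  ((Fintype.equivFin α).sumCongr (((Fintype.equivFin β).sumCongr (Fintype.equivFin γ)).trans
    finSumFinEquiv)).trans finSumFinEquiv

variable {α β γ}

theorem sumEnum_inl (a : α) : (sumEnum α β γ (.inl a) : ℕ) = Fintype.equivFin α a := by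
  simp [sumEnum]

theorem sumEnum_inr_inl (b : β) :
    (sumEnum α β γ (.inr (.inl b)) : ℕ) = Fintype.card α + Fintype.equivFin β b := by
  simp [sumEnum]

theorem sumEnum_inr_inr (c : γ) : (sumEnum α β γ (.inr (.inr c)) : ℕ) =
    Fintype.card α + (Fintype.card β + Fintype.equivFin γ c) := by
  simp [sumEnum]

theorem sumEnum_unit : (sumEnum α Unit γ (.inr (.inl ())) : ℕ) = Fintype.card α := by
  rw [sumEnum_inr_inl, Nat.add_eq_left, ← Nat.lt_one_iff]
  exact (Fintype.equivFin Unit ()).isLt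

theorem sumEnum_lt_iff {t : α ⊕ β ⊕ γ} :
    (sumEnum α β γ t : ℕ) < Fintype.card α ↔ t.isLeft := by
  rcases t with a | b | c
  · simp [sumEnum_inl]
  · simp [sumEnum_inr_inl]
  · simp [sumEnum_inr_inr]

end Enumeration

namespace DGResolution

section Bases

variable {R : Type*} [CommRing R] {J : Ideal R} {M₁ M₂ M₃ : Type*}
  [AddCommGroup M₁] [AddCommGroup M₂] [AddCommGroup M₃] [Module R M₁] [Module R M₂] [Module R M₃]
  {κ γ α₁ α₂ α₃ : Type*}

/-- Bases adapted to a product as in `HasTorProduct`: in degree `1` the vectors `U`-matched with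
degree `2`, then a vector on which `s` is `1`, then the others; in degree `2` the vectors
`U`-matched with degree `1`, those `V`-matched with degree `3`, and the others. -/
structure IsClassHBasis (s : M₁ →ₗ[R] R) (U : M₁ →ₗ[R] M₂)
    (V : M₂ →ₗ[R] M₃) (b₁ : Module.Basis (κ ⊕ Unit ⊕ α₁) R M₁)
    (b₂ : Module.Basis (κ ⊕ γ ⊕ α₂) R M₂) (b₃ : Module.Basis (Empty ⊕ γ ⊕ α₃) R M₃) : Prop where
  s_inl : ∀ k, s (b₁ (.inl k)) = 0
  s_unit : s (b₁ (.inr (.inl ()))) = 1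
  s_inr : ∀ a, s (b₁ (.inr (.inr a))) = 0
  U_inl : ∀ k, U (b₁ (.inl k)) = b₂ (.inl k)
  U_inr : ∀ a, U (b₁ (.inr (.inr a))) = 0
  V_inl : ∀ k, V (b₂ (.inl k)) = 0
  V_mid : ∀ c, V (b₂ (.inr (.inl c))) = b₃ (.inr (.inl c))
  V_inr : ∀ a, V (b₂ (.inr (.inr a))) = 0

variable (b₁ : Module.Basis (κ ⊕ Unit ⊕ α₁) R M₁) (b₂ : Module.Basis (κ ⊕ γ ⊕ α₂) R M₂)
  (b₃ : Module.Basis (Empty ⊕ γ ⊕ α₃) R M₃) (D : DGResolution J M₁ M₂ M₃)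
  [Fintype κ] [Fintype γ] [Fintype α₁] [Fintype α₂] [Fintype α₃]

/-- The resolution `D` in coordinates with respect to bases enumerated block by block. -/
noncomputable def inBases : DGResolution J
    (Fin (Fintype.card κ + (Fintype.card Unit + Fintype.card α₁)) → R)
    (Fin (Fintype.card κ + (Fintype.card γ + Fintype.card α₂)) → R)
    (Fin (Fintype.card Empty + (Fintype.card γ + Fintype.card α₃)) → R) :=
  D.congr (b₁.reindex (sumEnum ..)).equivFun (b₂.reindex (sumEnum ..)).equivFun
    (b₃.reindex (sumEnum ..)).equivFun

theorem inBases_mul (t t' : κ ⊕ Unit ⊕ α₁) :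
    (inBases b₁ b₂ b₃ D).mul (Pi.single (sumEnum _ _ _ t) 1) (Pi.single (sumEnum _ _ _ t') 1) =
      (b₂.reindex (sumEnum ..)).equivFun (D.mul (b₁ t) (b₁ t')) := by
  rw [← reindex_equivFun_apply b₁, ← reindex_equivFun_apply b₁]
  exact D.congr_mul ..

theorem inBases_mul₁₂ (t : κ ⊕ Unit ⊕ α₁) (t' : κ ⊕ γ ⊕ α₂) :
    (inBases b₁ b₂ b₃ D).mul₁₂ (Pi.single (sumEnum _ _ _ t) 1) (Pi.single (sumEnum _ _ _ t') 1) =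
      (b₃.reindex (sumEnum ..)).equivFun (D.mul₁₂ (b₁ t) (b₂ t')) := by
  rw [← reindex_equivFun_apply b₁, ← reindex_equivFun_apply b₂]
  exact D.congr_mul₁₂ ..

end Bases

section TorAlgebra

variable {R : Type*} [CommRing R] [IsLocalRing R] {J : Ideal R} {M₁ M₂ M₃ : Type*}
  [AddCommGroup M₁] [AddCommGroup M₂] [AddCommGroup M₃] [Module R M₁] [Module R M₂] [Module R M₃]
  {N₁ N₂ N₃ : Type*} [AddCommGroup N₁] [AddCommGroup N₂] [AddCommGroup N₃]
  [Module R N₁] [Module R N₂] [Module R N₃]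

/-- Minimality of a resolution: all differentials vanish modulo the maximal ideal. -/
structure IsMinimal (D : DGResolution J M₁ M₂ M₃) : Prop where
  d₁_mem : ∀ v, D.d₁ v ∈ maximalIdeal R
  d₂_mem : ∀ v, D.d₂ v ∈ maximalIdeal R • (⊤ : Submodule R M₁)
  d₃_mem : ∀ v, D.d₃ v ∈ maximalIdeal R • (⊤ : Submodule R M₂)

/-- Modulo the maximal ideal, the only nonzero products are those with the degree `1` element on
which `s` is `1`; multiplication by this element is `U` in degree `1` and `V` in degree `2`. -/
structure HasTorProduct (D : DGResolution J M₁ M₂ M₃) (s : M₁ →ₗ[R] R) (U : M₁ →ₗ[R] M₂)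
    (V : M₂ →ₗ[R] M₃) : Prop where
  mul_modEq : ∀ a b, D.mul a b ≡ s a • U b - s b • U a [SMOD maximalIdeal R • (⊤ : Submodule R M₂)]
  mul₁₂_modEq : ∀ a z, D.mul₁₂ a z ≡ s a • V z [SMOD maximalIdeal R • (⊤ : Submodule R M₃)]

theorem IsMinimal.congr {D : DGResolution J M₁ M₂ M₃} (hD : D.IsMinimal)
    (e₁ : M₁ ≃ₗ[R] N₁) (e₂ : M₂ ≃ₗ[R] N₂) (e₃ : M₃ ≃ₗ[R] N₃) : (D.congr e₁ e₂ e₃).IsMinimal where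
  d₁_mem _ := hD.d₁_mem _
  d₂_mem _ := map_mem_smul_top e₁.toLinearMap (hD.d₂_mem _)
  d₃_mem _ := map_mem_smul_top e₂.toLinearMap (hD.d₃_mem _)

theorem HasTorProduct.congr {D : DGResolution J M₁ M₂ M₃} {s : M₁ →ₗ[R] R} {U : M₁ →ₗ[R] M₂}
    {V : M₂ →ₗ[R] M₃} (h : D.HasTorProduct s U V) (e₁ : M₁ ≃ₗ[R] N₁) (e₂ : M₂ ≃ₗ[R] N₂)
    (e₃ : M₃ ≃ₗ[R] N₃) : (D.congr e₁ e₂ e₃).HasTorProduct (s ∘ₗ e₁.symm) (e₂ ∘ₗ U ∘ₗ e₁.symm)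
      (e₃ ∘ₗ V ∘ₗ e₂.symm) where
  mul_modEq a b := by
    simpa [DGResolution.congr] using
      map_modEq e₂.toLinearMap (h.mul_modEq (e₁.symm a) (e₁.symm b))
  mul₁₂_modEq a z := by
    have hm := D.congr_mul₁₂ e₁ e₂ e₃ (e₁.symm a) (e₂.symm z)
    rw [e₁.apply_symm_apply, e₂.apply_symm_apply] at hm
    simpa [hm] using map_modEq e₃.toLinearMap (h.mul₁₂_modEq (e₁.symm a) (e₂.symm z))

variable {κ γ α₁ α₂ α₃ : Type*} {s : M₁ →ₗ[R] R} {U : M₁ →ₗ[R] M₂} {V : M₂ →ₗ[R] M₃}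
  {b₁ : Module.Basis (κ ⊕ Unit ⊕ α₁) R M₁} {b₂ : Module.Basis (κ ⊕ γ ⊕ α₂) R M₂}
  {b₃ : Module.Basis (Empty ⊕ γ ⊕ α₃) R M₃} {D : DGResolution J M₁ M₂ M₃}

theorem HasTorProduct.mul_basis_modEq (h : D.HasTorProduct s U V)
    (hb : IsClassHBasis s U V b₁ b₂ b₃) (k : κ) :
    D.mul (b₁ (.inr (.inl ()))) (b₁ (.inl k)) ≡ b₂ (.inl k)
      [SMOD maximalIdeal R • (⊤ : Submodule R M₂)] := by
  simpa [hb.s_unit, hb.s_inl, hb.U_inl] using h.mul_modEq (b₁ (.inr (.inl ()))) (b₁ (.inl k))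

theorem HasTorProduct.mul_basis_mem (h : D.HasTorProduct s U V) (hb : IsClassHBasis s U V b₁ b₂ b₃)
    {t t' : κ ⊕ Unit ⊕ α₁} (ht : ¬(t = .inr (.inl ()) ∧ t'.isLeft))
    (ht' : ¬(t' = .inr (.inl ()) ∧ t.isLeft)) :
    D.mul (b₁ t) (b₁ t') ∈ maximalIdeal R • (⊤ : Submodule R M₂) := by
  have hm := h.mul_modEq (b₁ t) (b₁ t')
  rcases t with k | ⟨⟩ | a <;> rcases t' with k' | ⟨⟩ | a' <;>
    simp_all [hb.s_inl, hb.s_unit, hb.s_inr, hb.U_inr, SModEq.zero]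

theorem HasTorProduct.mul₁₂_basis_modEq (h : D.HasTorProduct s U V)
    (hb : IsClassHBasis s U V b₁ b₂ b₃) (c : γ) :
    D.mul₁₂ (b₁ (.inr (.inl ()))) (b₂ (.inr (.inl c))) ≡ b₃ (.inr (.inl c))
      [SMOD maximalIdeal R • (⊤ : Submodule R M₃)] := by
  simpa [hb.s_unit, hb.V_mid] using h.mul₁₂_modEq (b₁ (.inr (.inl ()))) (b₂ (.inr (.inl c)))

theorem HasTorProduct.mul₁₂_basis_mem (h : D.HasTorProduct s U V)
    (hb : IsClassHBasis s U V b₁ b₂ b₃) {t : κ ⊕ Unit ⊕ α₁} {t' : κ ⊕ γ ⊕ α₂}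
    (ht : ¬(t = .inr (.inl ()) ∧ ∃ c, t' = .inr (.inl c))) :
    D.mul₁₂ (b₁ t) (b₂ t') ∈ maximalIdeal R • (⊤ : Submodule R M₃) := by
  have hm := h.mul₁₂_modEq (b₁ t) (b₂ t')
  rcases t with k | ⟨⟩ | a <;> rcases t' with k' | c | a' <;>
    simp_all [hb.s_inl, hb.s_inr, hb.V_inl, hb.V_inr, SModEq.zero]

variable [Fintype κ] [Fintype γ] [Fintype α₁] [Fintype α₂] [Fintype α₃]

theorem HasTorProduct.inBases_mul_modEq (h : D.HasTorProduct s U V)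
    (hb : IsClassHBasis s U V b₁ b₂ b₃) (k : κ) :
    (inBases b₁ b₂ b₃ D).mul (Pi.single (sumEnum _ _ _ (.inr (.inl ()))) 1)
      (Pi.single (sumEnum _ _ _ (.inl k)) 1) ≡ Pi.single (sumEnum _ _ _ (.inl k)) 1
      [SMOD maximalIdeal R • (⊤ : Submodule R (Fin _ → R))] := by
  rw [inBases_mul, ← reindex_equivFun_apply b₂]
  exact map_modEq (b₂.reindex (sumEnum ..)).equivFun.toLinearMap (h.mul_basis_modEq hb k)

theorem HasTorProduct.inBases_mul_mem (h : D.HasTorProduct s U V)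
    (hb : IsClassHBasis s U V b₁ b₂ b₃) {i j : Fin _}
    (hij : ¬((i : ℕ) = Fintype.card κ ∧ (j : ℕ) < Fintype.card κ))
    (hji : ¬((j : ℕ) = Fintype.card κ ∧ (i : ℕ) < Fintype.card κ)) :
    (inBases b₁ b₂ b₃ D).mul (Pi.single i 1) (Pi.single j 1) ∈
      maximalIdeal R • (⊤ : Submodule R (Fin _ → R)) := by
  obtain ⟨t, rfl⟩ := (sumEnum κ Unit α₁).surjective i
  obtain ⟨t', rfl⟩ := (sumEnum κ Unit α₁).surjective j
  rw [inBases_mul]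
  refine map_mem_smul_top (b₂.reindex (sumEnum ..)).equivFun.toLinearMap
    (h.mul_basis_mem hb ?_ ?_)
  · rintro ⟨rfl, ht'⟩
    exact hij ⟨sumEnum_unit, sumEnum_lt_iff.2 ht'⟩
  · rintro ⟨rfl, ht⟩
    exact hji ⟨sumEnum_unit, sumEnum_lt_iff.2 ht⟩

theorem HasTorProduct.inBases_mul₁₂_modEq (h : D.HasTorProduct s U V)
    (hb : IsClassHBasis s U V b₁ b₂ b₃) (c : γ) :
    (inBases b₁ b₂ b₃ D).mul₁₂ (Pi.single (sumEnum _ _ _ (.inr (.inl ()))) 1)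
      (Pi.single (sumEnum _ _ _ (.inr (.inl c))) 1) ≡
        Pi.single (sumEnum _ _ _ (.inr (.inl c))) 1
      [SMOD maximalIdeal R • (⊤ : Submodule R (Fin _ → R))] := by
  rw [inBases_mul₁₂, ← reindex_equivFun_apply b₃]
  exact map_modEq (b₃.reindex (sumEnum ..)).equivFun.toLinearMap (h.mul₁₂_basis_modEq hb c)

theorem HasTorProduct.inBases_mul₁₂_mem (h : D.HasTorProduct s U V)
    (hb : IsClassHBasis s U V b₁ b₂ b₃) {i j : Fin _}
    (hij : ¬((i : ℕ) = Fintype.card κ ∧ Fintype.card κ ≤ (j : ℕ) ∧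
      (j : ℕ) < Fintype.card κ + Fintype.card γ)) :
    (inBases b₁ b₂ b₃ D).mul₁₂ (Pi.single i 1) (Pi.single j 1) ∈
      maximalIdeal R • (⊤ : Submodule R (Fin _ → R)) := by
  obtain ⟨t, rfl⟩ := (sumEnum κ Unit α₁).surjective i
  obtain ⟨t', rfl⟩ := (sumEnum κ γ α₂).surjective j
  rw [inBases_mul₁₂]
  refine map_mem_smul_top (b₃.reindex (sumEnum ..)).equivFun.toLinearMap
    (h.mul₁₂_basis_mem hb ?_)
  rintro ⟨rfl, c, rfl⟩
  exact hij ⟨sumEnum_unit, by simp [sumEnum_inr_inl], by simp [sumEnum_inr_inl]⟩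

end TorAlgebra

section Classes

variable {R : Type} [CommRing R] [IsLocalRing R] {J : Ideal R} {M₁ M₂ M₃ : Type*}
  [AddCommGroup M₁] [AddCommGroup M₂] [AddCommGroup M₃] [Module R M₁] [Module R M₂] [Module R M₃]

theorem isGolodQuotient [Module.Free R M₁] [Module.Finite R M₁] [Module.Free R M₂]
    [Module.Finite R M₂] [Module.Free R M₃] [Module.Finite R M₃] {D : DGResolution J M₁ M₂ M₃}
    (hD : D.IsMinimal) {U : M₁ →ₗ[R] M₂} {V : M₂ →ₗ[R] M₃} (h : D.HasTorProduct 0 U V) :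
    IsGolodQuotient R J := by
  let e₁ := (Module.finBasis R M₁).equivFun
  let e₂ := (Module.finBasis R M₂).equivFun
  let e₃ := (Module.finBasis R M₃).equivFun
  let E := D.congr e₁ e₂ e₃
  have hE : E.IsMinimal := hD.congr e₁ e₂ e₃
  refine ⟨_, _, _, E.d₁, E.d₂, E.d₃, E.mul, E.mul₁₂, E.range_d₁, E.exact₁.linearMap_ker_eq,
    E.exact₂.linearMap_ker_eq, LinearMap.ker_eq_bot.2 E.injective_d₃, hE.d₁_mem, hE.d₂_mem,
    hE.d₃_mem, E.d₂_mul, E.isAlt_mul, fun a b => (E.isAlt_mul.neg b a).symm, E.d₃_mul₁₂,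
    E.mul₁₂_mul, fun a b => ?_, fun a z => ?_⟩
  · rw [← e₁.apply_symm_apply a, ← e₁.apply_symm_apply b, congr_mul]
    exact map_mem_smul_top e₂.toLinearMap (by simpa [SModEq.zero] using h.mul_modEq _ _)
  · rw [← e₁.apply_symm_apply a, ← e₂.apply_symm_apply z, congr_mul₁₂]
    exact map_mem_smul_top e₃.toLinearMap (by simpa [SModEq.zero] using h.mul₁₂_modEq _ _)

variable {κ γ α₁ α₂ α₃ : Type*} {s : M₁ →ₗ[R] R} {U : M₁ →ₗ[R] M₂} {V : M₂ →ₗ[R] M₃}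
  {b₁ : Module.Basis (κ ⊕ Unit ⊕ α₁) R M₁} {b₂ : Module.Basis (κ ⊕ γ ⊕ α₂) R M₂}
  {b₃ : Module.Basis (Empty ⊕ γ ⊕ α₃) R M₃} {D : DGResolution J M₁ M₂ M₃}
  [Fintype κ] [Fintype γ] [Finite α₁] [Finite α₂] [Finite α₃]

theorem hasTorClassH (hD : D.IsMinimal) (h : D.HasTorProduct s U V)
    (hb : IsClassHBasis s U V b₁ b₂ b₃) :
    HasTorClassH R J (Fintype.card κ) (Fintype.card γ) := by
  have := Fintype.ofFinite α₁
  have := Fintype.ofFinite α₂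
  have := Fintype.ofFinite α₃
  let E := inBases b₁ b₂ b₃ D
  have hE : E.IsMinimal := hD.congr ..
  have hκ : Fintype.card κ < Fintype.card κ + (Fintype.card Unit + Fintype.card α₁) := by simp
  have hunit : (⟨Fintype.card κ, hκ⟩ : Fin _) = sumEnum κ Unit α₁ (.inr (.inl ())) :=
    Fin.ext sumEnum_unit.symm
  refine ⟨_, _, _, hκ, by omega, by omega, E.d₁, E.d₂, E.d₃, E.mul, E.mul₁₂, E.range_d₁,
    E.exact₁.linearMap_ker_eq, E.exact₂.linearMap_ker_eq, LinearMap.ker_eq_bot.2 E.injective_d₃,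
    hE.d₁_mem, hE.d₂_mem, hE.d₃_mem, E.d₂_mul, E.isAlt_mul, fun a b => (E.isAlt_mul.neg b a).symm,
    E.d₃_mul₁₂, E.mul₁₂_mul, fun i hi => SModEq.sub_mem.1 ?_, fun i j => h.inBases_mul_mem hb,
    fun i hi hi' => SModEq.sub_mem.1 ?_, fun i j => h.inBases_mul₁₂_mem hb⟩
  · obtain ⟨t, rfl⟩ := (sumEnum κ Unit α₁).surjective i
    obtain ⟨k, rfl⟩ := Sum.isLeft_iff.1 (sumEnum_lt_iff.1 hi)
    have hk : (⟨sumEnum κ Unit α₁ (.inl k), by omega⟩ : Fin _) = sumEnum κ γ α₂ (.inl k) :=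
      Fin.ext ((sumEnum_inl k).trans (sumEnum_inl k).symm)
    rw [hunit, hk]
    exact h.inBases_mul_modEq hb k
  · obtain ⟨k | c | a, rfl⟩ := (sumEnum κ γ α₂).surjective i
    · exact absurd (sumEnum_lt_iff.2 rfl) hi.not_gt
    · have hc : (⟨sumEnum κ γ α₂ (.inr (.inl c)) - Fintype.card κ, by omega⟩ : Fin _) =
          sumEnum Empty γ α₃ (.inr (.inl c)) := Fin.ext (by simp [sumEnum_inr_inl])
      rw [hunit, hc]
      exact h.inBases_mul₁₂_modEq hb c
    · have ha := sumEnum_inr_inr (α := κ) (β := γ) a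
      omega

end Classes

section Trimming

variable {R : Type*} [CommRing R] {x : Fin 3 → R} {J : Ideal R} {A B M₂ M₃ : Type*}
  [AddCommGroup A] [AddCommGroup M₂] [AddCommGroup M₃] [Module R A] [Module R M₂] [Module R M₃]
  {D : DGResolution J (A × (B → R)) M₂ M₃}

/-- The map from the degree `1` part of the trimming complex to the degree `1` part of the
original resolution. -/
def trimIncl (x : Fin 3 → R) (A B : Type*) [AddCommGroup A] [Module R A] :
    A × (B × Fin 3 → R) →ₗ[R] A × (B → R) :=
  LinearMap.id.prodMap (kosz₁ x B)

/-- The comparison maps from a resolution to the copies, indexed by `B`, of the Koszul complex on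
`x`: `q` and `Q` are the paper's `Q₁` and `Q₂` and `κ` is a homotopy that corrects the
multiplicativity of `q`. -/
structure TrimData (x : Fin 3 → R) (D : DGResolution J (A × (B → R)) M₂ M₃) where
  q : M₂ →ₗ[R] (B × Fin 3 → R)
  Q : M₃ →ₗ[R] (B × Fin 3 → R)
  κ : (A × (B × Fin 3 → R)) →ₗ[R] (A × (B × Fin 3 → R)) →ₗ[R] (B × Fin 3 → R)
  kosz₁_q : ∀ v, kosz₁ x B (q v) = (D.d₂ v).2
  kosz₂_Q : ∀ w, kosz₂ x B (Q w) = q (D.d₃ w)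
  kosz₂_κ : ∀ a b, kosz₂ x B (κ a b) = D.d₁ (trimIncl x A B a) • b.2 -
    D.d₁ (trimIncl x A B b) • a.2 - q (D.mul (trimIncl x A B a) (trimIncl x A B b))
  isAlt_κ : κ.IsAlt

variable (t : TrimData x D)

namespace TrimData

/-- The second differential of the trimming complex. -/
def d₂ : M₂ × (B × Fin 3 → R) →ₗ[R] A × (B × Fin 3 → R) :=
  (LinearMap.fst R A (B → R) ∘ₗ D.d₂ ∘ₗ LinearMap.fst R _ _).prod (t.q.coprod (kosz₂ x B))

/-- The third differential of the trimming complex. -/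
def d₃ : M₃ × (B → R) →ₗ[R] M₂ × (B × Fin 3 → R) :=
  (D.d₃ ∘ₗ LinearMap.fst R _ _).prod ((-t.Q).coprod (kosz₃ x B))

/-- The product on the degree `1` part of the trimming complex. -/
def mul : A × (B × Fin 3 → R) →ₗ[R] A × (B × Fin 3 → R) →ₗ[R] M₂ × (B × Fin 3 → R) :=
  (D.mul.compl₁₂ (trimIncl x A B) (trimIncl x A B)).compr₂ (LinearMap.inl R _ _) +
    t.κ.compr₂ (LinearMap.inr R _ _)

theorem d₂_apply (v : M₂) (h : B × Fin 3 → R) :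
    t.d₂ (v, h) = ((D.d₂ v).1, t.q v + kosz₂ x B h) := rfl

theorem d₃_apply (w : M₃) (r : B → R) : t.d₃ (w, r) = (D.d₃ w, -t.Q w + kosz₃ x B r) := rfl

theorem mul_apply (a b : A × (B × Fin 3 → R)) :
    t.mul a b = (D.mul (trimIncl x A B a) (trimIncl x A B b), t.κ a b) := by
  simp [mul]

theorem trimIncl_d₂ (u : M₂ × (B × Fin 3 → R)) : trimIncl x A B (t.d₂ u) = D.d₂ u.1 := by
  simp [trimIncl, d₂, t.kosz₁_q]

theorem exact_d₂ (hx : IsRegularTriple x) : Exact t.d₂ (D.d₁ ∘ₗ trimIncl x A B) := by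
  rintro ⟨a, k⟩
  refine ⟨fun hak => ?_, ?_⟩
  · obtain ⟨v, hv⟩ := (D.exact₁ _).1 hak
    obtain ⟨h, hh⟩ := (kosz₂_exact_kosz₁ hx (k - t.q v)).1 (by simp [t.kosz₁_q, hv, trimIncl])
    exact ⟨(v, h), by simp [d₂_apply, hv, hh, trimIncl]⟩
  · rintro ⟨u, hu⟩
    simp [← hu, t.trimIncl_d₂]

theorem exact_d₃ (hx : IsRegularTriple x) : Exact t.d₃ t.d₂ := by
  rintro ⟨v, h⟩
  refine ⟨fun hvh => ?_, ?_⟩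
  · obtain ⟨w, rfl⟩ := (D.exact₂ v).1 (by simpa [hvh] using (t.trimIncl_d₂ (v, h)).symm)
    obtain ⟨r, hr⟩ := (kosz₃_exact_kosz₂ hx (t.Q w + h)).1
      (by simpa [d₂_apply, t.kosz₂_Q] using congrArg Prod.snd hvh)
    exact ⟨(w, r), by simp [d₃_apply, hr]⟩
  · rintro ⟨⟨w, r⟩, hu⟩
    simp [← hu, d₂_apply, d₃_apply, t.kosz₂_Q]

theorem injective_d₃ (hx : IsRegularTriple x) : Injective t.d₃ := by
  refine (injective_iff_map_eq_zero _).2 fun ⟨w, r⟩ hwr => ?_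
  obtain rfl : w = 0 := D.injective_d₃ ((congrArg Prod.fst hwr).trans (map_zero _).symm)
  obtain rfl : r = 0 := kosz₃_injective hx (by simpa [d₃_apply] using hwr)
  rfl

/-- The trimming complex, the mapping cone of the comparison maps, as a DG-algebra resolution. -/
def trim (hx : IsRegularTriple x) : DGResolution (LinearMap.range (D.d₁ ∘ₗ trimIncl x A B))
    (A × (B × Fin 3 → R)) (M₂ × (B × Fin 3 → R)) (M₃ × (B → R)) where
  d₁ := D.d₁ ∘ₗ trimIncl x A B
  d₂ := t.d₂
  d₃ := t.d₃
  mul := t.mul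
  range_d₁ := rfl
  exact₁ := t.exact_d₂ hx
  exact₂ := t.exact_d₃ hx
  injective_d₃ := t.injective_d₃ hx
  d₂_mul a b := by
    simp [mul_apply, d₂_apply, D.d₂_mul, t.kosz₂_κ, Prod.ext_iff, trimIncl]
  isAlt_mul a := by
    simp [mul_apply, t.isAlt_κ _, D.isAlt_mul _]

theorem trim_mul₁₂_fst (hx : IsRegularTriple x) (a : A × (B × Fin 3 → R))
    (u : M₂ × (B × Fin 3 → R)) :
    ((t.trim hx).mul₁₂ a u).1 = D.mul₁₂ (trimIncl x A B a) u.1 := by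
  rw [eq_comm, mul₁₂_eq_iff]
  have h := congrArg Prod.fst ((t.trim hx).d₃_mul₁₂ a u)
  simpa [trim, mul_apply, trimIncl_d₂, d₃] using h

theorem kosz₃_trim_mul₁₂_snd (hx : IsRegularTriple x) (a : A × (B × Fin 3 → R))
    (u : M₂ × (B × Fin 3 → R)) : kosz₃ x B ((t.trim hx).mul₁₂ a u).2 =
      D.d₁ (trimIncl x A B a) • u.2 - t.κ a (t.d₂ u) +
        t.Q (D.mul₁₂ (trimIncl x A B a) u.1) := by
  have h := congrArg Prod.snd ((t.trim hx).d₃_mul₁₂ a u)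
  rw [← trim_mul₁₂_fst t hx, add_comm, ← neg_add_eq_iff_eq_add]
  simpa [trim, mul_apply, d₃] using h

end TrimData

section Reduction

/-- The commutation `(M × N) × P ≃ (M × P) × N`. -/
def prodRightComm (R M N P : Type*) [CommRing R] [AddCommGroup M] [AddCommGroup N]
    [AddCommGroup P] [Module R M] [Module R N] [Module R P] :
    ((M × N) × P) ≃ₗ[R] (M × P) × N where
  toFun u := ((u.1.1, u.2), u.1.2)
  invFun u := ((u.1.1, u.2), u.1.2)
  map_add' _ _ := rfl
  map_smul' _ _ := rfl
  left_inv _ := rfl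
  right_inv _ := rfl

/-- A splitting `e` of `P` and the associativity of products. -/
def splitRight (A : Type*) {R P N C : Type*} [CommRing R] [AddCommGroup A] [AddCommGroup P]
    [AddCommGroup N] [AddCommGroup C] [Module R A] [Module R P] [Module R N] [Module R C]
    (e : P ≃ₗ[R] N × C) : (A × P) ≃ₗ[R] (A × N) × C where
  toFun u := ((u.1, (e u.2).1), (e u.2).2)
  invFun u := (u.1.1, e.symm (u.1.2, u.2))
  map_add' _ _ := by simp
  map_smul' _ _ := by simp
  left_inv _ := by simp
  right_inv _ := by simp

variable {N C M₂' : Type*} [AddCommGroup N] [AddCommGroup C] [AddCommGroup M₂']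
  [Module R N] [Module R C] [Module R M₂'] {D : DGResolution J (A × (B → R)) (M₂' × C) M₃}
  (t : TrimData x D) (hx : IsRegularTriple x) (e : (B × Fin 3 → R) ≃ₗ[R] N × C)

namespace TrimData

/-- The trimming complex with the modules in degrees `1` and `2` split as required by
`DGResolution.cancel`. -/
def split : DGResolution (LinearMap.range (D.d₁ ∘ₗ trimIncl x A B))
    ((A × N) × C) ((M₂' × (B × Fin 3 → R)) × C) (M₃ × (B → R)) :=
  (t.trim hx).congr (splitRight A e) (prodRightComm R M₂' C (B × Fin 3 → R)) (.refl R _)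

variable (he : ∀ c, (e (t.q (0, c))).2 = c)

include he in
theorem split_d₂_snd (c : C) : ((t.split hx e).d₂ (0, c)).2 = c := by
  simpa [split, congr, trim, prodRightComm, splitRight, d₂] using he c

/-- The trimming complex with the unit entries of `q` cancelled. -/
def reduce : DGResolution (LinearMap.range (D.d₁ ∘ₗ trimIncl x A B))
    (A × N) (M₂' × (B × Fin 3 → R)) (M₃ × (B → R)) :=
  (t.split hx e).cancel (t.split_d₂_snd hx e he)

/-- The map from degree `1` of the reduced trimming complex to degree `1` of the trimming
complex. -/
def reduceIncl₁ : A × N →ₗ[R] A × (B × Fin 3 → R) :=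
  LinearMap.id.prodMap (e.symm.toLinearMap ∘ₗ LinearMap.inl R N C)

/-- The map from degree `2` of the reduced trimming complex to degree `2` of the trimming
complex. -/
def reduceIncl₂ : M₂' × (B × Fin 3 → R) →ₗ[R] (M₂' × C) × (B × Fin 3 → R) :=
  (prodRightComm R M₂' C (B × Fin 3 → R)).symm.toLinearMap ∘ₗ (t.split hx e).cancelIncl

theorem reduceIncl₂_apply (z : M₂' × (B × Fin 3 → R)) :
    t.reduceIncl₂ hx e z = ((z.1, -(e (t.q (z.1, 0) + kosz₂ x B z.2)).2), z.2) := rfl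

theorem reduceIncl₁_reduce_d₂ (z : M₂' × (B × Fin 3 → R)) :
    reduceIncl₁ e ((t.reduce hx e he).d₂ z) = t.d₂ (t.reduceIncl₂ hx e z) := by
  have h := (t.split hx e).d₂_cancelIncl (t.split_d₂_snd hx e he) z
  exact ((splitRight A e).symm_apply_apply _).symm.trans
    (congrArg (splitRight A e).symm h) |>.symm

theorem reduce_d₃ (w : M₃ × (B → R)) : (t.reduce hx e he).d₃ w =
    ((D.d₃ w.1).1, -t.Q w.1 + kosz₃ x B w.2) := rfl

theorem reduce_mul (a b : A × N) : (t.reduce hx e he).mul a b =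
    ((D.mul (trimIncl x A B (reduceIncl₁ e a)) (trimIncl x A B (reduceIncl₁ e b))).1,
      t.κ (reduceIncl₁ e a) (reduceIncl₁ e b)) := by
  have h := t.mul_apply (reduceIncl₁ e a) (reduceIncl₁ e b)
  exact congrArg (fun u => ((u.1.1, u.2) : M₂' × (B × Fin 3 → R))) h

theorem reduce_mul₁₂ (a : A × N) (z : M₂' × (B × Fin 3 → R)) : (t.reduce hx e he).mul₁₂ a z =
    (t.trim hx).mul₁₂ (reduceIncl₁ e a) (t.reduceIncl₂ hx e z) := by
  have h := (t.trim hx).congr_mul₁₂ (splitRight A e) (prodRightComm R M₂' C (B × Fin 3 → R))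
    (.refl R _) (reduceIncl₁ e a) (t.reduceIncl₂ hx e z)
  rw [show splitRight A e (reduceIncl₁ e a) = (a, 0) by simp [splitRight, reduceIncl₁]] at h
  exact (cancel_mul₁₂ ..).trans h

end TrimData
end Reduction
end Trimming

section Minimality

variable {R : Type*} [CommRing R] [IsLocalRing R] {x : Fin 3 → R} {J : Ideal R}
  {A B N C M₂ M₃ : Type*} [AddCommGroup A] [AddCommGroup N] [AddCommGroup C] [AddCommGroup M₂]
  [AddCommGroup M₃] [Module R A] [Module R N] [Module R C] [Module R M₂] [Module R M₃]
  {D : DGResolution J (A × (B → R)) (M₂ × C) M₃}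

/-- The comparison maps are small modulo powers of the maximal ideal, except that `q` may have unit
entries on the summand `C`. -/
structure TrimData.IsSmall (t : TrimData x D) : Prop where
  d₁_mem_sq : ∀ a, D.d₁ a ∈ maximalIdeal R ^ 2
  q_mem : ∀ v, t.q (v, 0) ∈ maximalIdeal R • (⊤ : Submodule R (B × Fin 3 → R))
  Q_mem : ∀ w, t.Q w ∈ maximalIdeal R • (⊤ : Submodule R (B × Fin 3 → R))
  κ_mem : ∀ a b, t.κ a b ∈ maximalIdeal R • (⊤ : Submodule R (B × Fin 3 → R))
  Q_mul₁₂_mem_sq : ∀ a z, t.Q (D.mul₁₂ (trimIncl x A B a) z) ∈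
    maximalIdeal R ^ 2 • (⊤ : Submodule R (B × Fin 3 → R))

variable [Finite B] {t : TrimData x D} (ht : t.IsSmall) (hx : IsRegularTriple x)
  (hxm : Ideal.span (Set.range x) = maximalIdeal R) (e : (B × Fin 3 → R) ≃ₗ[R] N × C)
  (he : ∀ c, (e (t.q (0, c))).2 = c)

include hxm

theorem trimIncl_modEq (a : A × (B × Fin 3 → R)) : trimIncl x A B a ≡ (a.1, 0)
    [SMOD maximalIdeal R • (⊤ : Submodule R (A × (B → R)))] :=
  SModEq.sub_mem.2 (mem_smul_top_prod_iff.2 ⟨by simp [trimIncl], by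
    simpa [trimIncl, hxm] using kosz₁_mem (x := x) a.2⟩)

namespace TrimData

include ht

theorem reduceIncl₂_modEq (z : M₂ × (B × Fin 3 → R)) : t.reduceIncl₂ hx e z ≡ ((z.1, 0), z.2)
    [SMOD maximalIdeal R • (⊤ : Submodule R ((M₂ × C) × (B × Fin 3 → R)))] := by
  have hz : t.q (z.1, 0) + kosz₂ x B z.2 ∈ maximalIdeal R • (⊤ : Submodule R (B × Fin 3 → R)) :=
    add_mem (ht.q_mem _) (hxm ▸ kosz₂_mem _)
  refine SModEq.sub_mem.2 (mem_smul_top_prod_iff.2 ⟨mem_smul_top_prod_iff.2 ⟨?_, ?_⟩, ?_⟩)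
  · simp [reduceIncl₂_apply]
  · simp only [reduceIncl₂_apply, Prod.fst_sub, Prod.snd_sub, sub_zero]
    exact neg_mem (map_mem_smul_top (.snd R N C ∘ₗ e.toLinearMap) hz)
  · simp [reduceIncl₂_apply]

theorem isMinimal_reduce (hD : D.IsMinimal) : (t.reduce hx e he).IsMinimal where
  d₁_mem a := hD.d₁_mem _
  d₂_mem z := by
    have h : t.d₂ ((z.1, 0), z.2) ∈ maximalIdeal R • (⊤ : Submodule R (A × (B × Fin 3 → R))) :=
      mem_smul_top_prod_iff.2 ⟨map_mem_smul_top (.fst R A (B → R)) (hD.d₂_mem _),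
        add_mem (ht.q_mem _) (hxm ▸ kosz₂_mem _)⟩
    exact map_mem_smul_top (.fst R (A × N) C ∘ₗ (splitRight A e).toLinearMap)
      (SModEq.zero.1 ((map_modEq t.d₂ (reduceIncl₂_modEq ht hx hxm e z)).trans (SModEq.zero.2 h)))
  d₃_mem w := by
    rw [reduce_d₃]
    exact mem_smul_top_prod_iff.2 ⟨map_mem_smul_top (.fst R M₂ C) (hD.d₃_mem _),
      add_mem (neg_mem (ht.Q_mem _)) (hxm ▸ kosz₃_mem _)⟩

theorem reduce_mul₁₂_snd_mem (hD : D.IsMinimal) (a : A × N) (z : M₂ × (B × Fin 3 → R)) :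
    ((t.reduce hx e he).mul₁₂ a z).2 ∈ maximalIdeal R • (⊤ : Submodule R (B → R)) := by
  have hκ := map_mem_mul_smul_top (t.κ (reduceIncl₁ e a)) (ht.κ_mem _)
    (map_mem_smul_top (reduceIncl₁ e) ((isMinimal_reduce ht hx hxm e he hD).d₂_mem z))
  rw [reduceIncl₁_reduce_d₂, ← sq] at hκ
  rw [reduce_mul₁₂, ← hxm]
  refine mem_of_kosz₃_mem_sq hx ?_
  rw [kosz₃_trim_mul₁₂_snd, hxm]
  exact add_mem (sub_mem (smul_mem_smul_top (ht.d₁_mem_sq _) _) hκ) (ht.Q_mul₁₂_mem_sq _ _)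

theorem hasTorProduct_reduce (hD : D.IsMinimal) {s : (A × (B → R)) →ₗ[R] R}
    {U : (A × (B → R)) →ₗ[R] (M₂ × C)} {V : (M₂ × C) →ₗ[R] M₃} (h : D.HasTorProduct s U V) :
    (t.reduce hx e he).HasTorProduct (s ∘ₗ .inl R A (B → R) ∘ₗ .fst R A N)
      (.inl R M₂ (B × Fin 3 → R) ∘ₗ .fst R M₂ C ∘ₗ U ∘ₗ .inl R A (B → R) ∘ₗ .fst R A N)
      (.inl R M₃ (B → R) ∘ₗ V ∘ₗ .inl R M₂ C ∘ₗ .fst R M₂ (B × Fin 3 → R)) where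
  mul_modEq a b := by
    have hmul := (map₂_modEq D.mul (trimIncl_modEq hxm (reduceIncl₁ e a))
      (trimIncl_modEq hxm (reduceIncl₁ e b))).trans (h.mul_modEq _ _)
    have hfst := SModEq.sub_mem.1 (map_modEq (.fst R M₂ C) hmul)
    rw [reduce_mul]
    refine SModEq.sub_mem.2 (mem_smul_top_prod_iff.2 ⟨by simpa [reduceIncl₁] using hfst, ?_⟩)
    simpa using ht.κ_mem _ _
  mul₁₂_modEq a z := by
    have hmul := (map₂_modEq D.mul₁₂ (trimIncl_modEq hxm (reduceIncl₁ e a))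
      (map_modEq (.fst R (M₂ × C) (B × Fin 3 → R)) (reduceIncl₂_modEq ht hx hxm e z))).trans
        (h.mul₁₂_modEq _ _)
    refine SModEq.sub_mem.2 (mem_smul_top_prod_iff.2 ⟨?_, ?_⟩)
    · rw [Prod.fst_sub, reduce_mul₁₂, trim_mul₁₂_fst]
      simpa [reduceIncl₁] using SModEq.sub_mem.1 hmul
    · simpa using reduce_mul₁₂_snd_mem ht hx hxm e he hD a z

end TrimData
end Minimality

section Existence

variable {R : Type*} [CommRing R] {x : Fin 3 → R} {J : Ideal R} {A B M₂ M₃ : Type*}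
  [AddCommGroup A] [AddCommGroup M₂] [AddCommGroup M₃] [Module R A] [Module R M₂] [Module R M₃]
  {D : DGResolution J (A × (B → R)) M₂ M₃} [Finite B] (hx : IsRegularTriple x)
  {q : M₂ →ₗ[R] (B × Fin 3 → R)} (hq : ∀ v, kosz₁ x B (q v) = (D.d₂ v).2)

include hx hq

theorem exists_comparison₃ [Module.Projective R M₃]
    (hq_d₃ : ∀ w, q (D.d₃ w) ∈ Ideal.span (Set.range x) ^ 2 • (⊤ : Submodule R (B × Fin 3 → R))) :
    ∃ Q : M₃ →ₗ[R] (B × Fin 3 → R),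
      (∀ w, Q w ∈ Ideal.span (Set.range x) • (⊤ : Submodule R (B × Fin 3 → R))) ∧
        ∀ w, kosz₂ x B (Q w) = q (D.d₃ w) :=
  exists_lift_of_mem_map _ (kosz₂ x B) (q ∘ₗ D.d₃) fun w =>
    exists_kosz₂_eq_of_mem_sq hx (by simp [hq]) (hq_d₃ w)

theorem exists_homotopy [Module.Free R A]
    (hd₁ : ∀ a, D.d₁ a ∈ Ideal.span (Set.range x) ^ 2)
    (hq_mul : ∀ a b, q (D.mul a b) ∈
      Ideal.span (Set.range x) ^ 2 • (⊤ : Submodule R (B × Fin 3 → R))) :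
    ∃ κ : (A × (B × Fin 3 → R)) →ₗ[R] (A × (B × Fin 3 → R)) →ₗ[R] (B × Fin 3 → R), κ.IsAlt ∧
      (∀ a b, κ a b ∈ Ideal.span (Set.range x) • (⊤ : Submodule R (B × Fin 3 → R))) ∧
      ∀ a b, kosz₂ x B (κ a b) = D.d₁ (trimIncl x A B a) • b.2 - D.d₁ (trimIncl x A B b) • a.2 -
        q (D.mul (trimIncl x A B a) (trimIncl x A B b)) := by
  let f : (A × (B × Fin 3 → R)) →ₗ[R] (A × (B × Fin 3 → R)) →ₗ[R] (B × Fin 3 → R) :=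
    LinearMap.mk₂ R (fun a b => D.d₁ (trimIncl x A B a) • b.2 - D.d₁ (trimIncl x A B b) • a.2 -
        q (D.mul (trimIncl x A B a) (trimIncl x A B b)))
      (by intros; simp only [map_add, LinearMap.add_apply, Prod.snd_add]; module)
      (by intros; simp only [map_smul, LinearMap.smul_apply, Prod.smul_snd, smul_eq_mul]; module)
      (by intros; simp only [map_add, Prod.snd_add]; module)
      (by intros; simp only [map_smul, Prod.smul_snd, smul_eq_mul]; module)
  refine exists_isAlt_lift_of_mem_map _ (kosz₂ x B) f (fun a => ?_) fun a b =>
    exists_kosz₂_eq_of_mem_sq hx ?_ ?_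
  · simp [f, D.isAlt_mul _]
  · simp [f, hq, D.d₂_mul, trimIncl]
  · exact sub_mem (sub_mem (smul_mem_smul_top (hd₁ _) _) (smul_mem_smul_top (hd₁ _) _)) (hq_mul _ _)

end Existence

section ExistsSmall

variable {R : Type*} [CommRing R] [IsLocalRing R] {x : Fin 3 → R} {J : Ideal R}
  {A B C M₂ M₃ : Type*} [AddCommGroup A] [AddCommGroup C] [AddCommGroup M₂] [AddCommGroup M₃]
  [Module R A] [Module R C] [Module R M₂] [Module R M₃]
  {D : DGResolution J (A × (B → R)) (M₂ × C) M₃} [Finite B] [Module.Free R A]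

theorem exists_isSmall_trimData (hx : IsRegularTriple x)
    (hxm : Ideal.span (Set.range x) = maximalIdeal R)
    {q : (M₂ × C) →ₗ[R] (B × Fin 3 → R)} {Q : M₃ →ₗ[R] (B × Fin 3 → R)}
    (hq : ∀ v, kosz₁ x B (q v) = (D.d₂ v).2) (hQ : ∀ w, kosz₂ x B (Q w) = q (D.d₃ w))
    (hd₁ : ∀ a, D.d₁ a ∈ maximalIdeal R ^ 2)
    (hq_mem : ∀ v, q (v, 0) ∈ maximalIdeal R • (⊤ : Submodule R (B × Fin 3 → R)))
    (hq_mul : ∀ a b, q (D.mul a b) ∈ maximalIdeal R ^ 2 • (⊤ : Submodule R (B × Fin 3 → R)))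
    (hQ_mem : ∀ w, Q w ∈ maximalIdeal R • (⊤ : Submodule R (B × Fin 3 → R)))
    (hQ_mul : ∀ a z, Q (D.mul₁₂ (trimIncl x A B a) z) ∈
      maximalIdeal R ^ 2 • (⊤ : Submodule R (B × Fin 3 → R))) :
    ∃ t : TrimData x D, t.q = q ∧ t.IsSmall := by
  obtain ⟨κ, hκ, hκ_mem, hκ_kosz⟩ := exists_homotopy hx hq (hxm ▸ hd₁) (hxm ▸ hq_mul)
  exact ⟨⟨q, Q, κ, hq, hQ, hκ_kosz, hκ⟩, rfl, hd₁, hq_mem, hQ_mem, hxm ▸ hκ_mem, hQ_mul⟩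

end ExistsSmall
end DGResolution

section HilbertBurch

theorem det_mem_pow_card {R m : Type*} [CommRing R] [Fintype m] [DecidableEq m] {I : Ideal R}
    {A : Matrix m m R} {s : Finset m} (h : ∀ j ∈ s, ∀ i, A i j ∈ I) : A.det ∈ I ^ s.card := by
  rw [det_apply]
  refine sum_mem fun τ _ => Submodule.smul_of_tower_mem _ _ ?_
  rw [← Finset.prod_mul_prod_compl s, ← Finset.prod_const]
  exact Ideal.mul_mem_right _ _ (Ideal.prod_mem_prod fun j hj => h j hj _)

variable {R : Type*} [CommRing R] {n : ℕ} (X : Matrix (Fin (n + 1)) (Fin n) R)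

/-- The matrix `X` with a column `u` prepended. -/
def augment (u : Fin (n + 1) → R) : Matrix (Fin (n + 1)) (Fin (n + 1)) R :=
  of fun i => Fin.cons (u i) (X i)

/-- The maximal minor of `X` that omits row `i`, with sign. -/
def signedMinor (i : Fin (n + 1)) : R :=
  (-1) ^ (i : ℕ) * (X.submatrix i.succAbove id).det

/-- The first map of the Hilbert-Burch complex of `X`, given by the signed maximal minors. -/
def minorForm : (Fin (n + 1) → R) →ₗ[R] R := Fintype.linearCombination R (signedMinor X)

theorem minorForm_apply (u : Fin (n + 1) → R) : minorForm X u = ∑ i, u i * signedMinor X i := rfl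

theorem minorForm_single (i : Fin (n + 1)) : minorForm X (Pi.single i 1) = signedMinor X i := by
  simp [minorForm]

theorem det_augment (u : Fin (n + 1) → R) : (augment X u).det = minorForm X u := by
  rw [det_succ_column_zero, minorForm_apply]
  refine Finset.sum_congr rfl fun i _ => ?_
  rw [signedMinor, mul_comm _ (augment X u i 0), mul_assoc]
  rfl

theorem augment_mulVec (u w : Fin (n + 1) → R) :
    augment X u *ᵥ w = w 0 • u + X *ᵥ Fin.tail w := by
  ext i
  simp [augment, mulVec, dotProduct, Fin.sum_univ_succ, Fin.tail, mul_comm]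

theorem cramer_augment_mulVec (u w : Fin (n + 1) → R) :
    (augment X u).cramer (augment X u *ᵥ w) = minorForm X u • w := by
  rw [cramer_eq_adjugate_mulVec, mulVec_mulVec, adjugate_mul, det_augment, smul_mulVec, one_mulVec]

theorem cramer_augment_succ (u v : Fin (n + 1) → R) (c : Fin n) : (augment X u).cramer v c.succ =
    (((augment X 0).updateCol c.succ v).updateCol 0 u).det := by
  rw [cramer_apply]
  congr 1
  ext i j
  refine Fin.cases ?_ (fun j => ?_) j <;> simp [augment, updateCol_apply, (Fin.succ_ne_zero c).symm]

/-- The product of the Hilbert-Burch resolution: component `c` of `hbMul X u v` is the determinant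
of `[u | X]` with the column `c` of `X` replaced by `v`. -/
def hbMul : (Fin (n + 1) → R) →ₗ[R] (Fin (n + 1) → R) →ₗ[R] (Fin n → R) :=
  LinearMap.mk₂ R (fun u v => Fin.tail ((augment X u).cramer v))
    (fun _ _ _ => funext fun _ => by
      simp only [Fin.tail, cramer_augment_succ, det_updateCol_add, Pi.add_apply])
    (fun _ _ _ => funext fun _ => by
      simp only [Fin.tail, cramer_augment_succ, det_updateCol_smul,
        Pi.smul_apply, smul_eq_mul])
    (fun _ _ _ => by rw [map_add]; rfl) (fun _ _ _ => by rw [map_smul]; rfl)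

theorem hbMul_apply (u v : Fin (n + 1) → R) :
    hbMul X u v = Fin.tail ((augment X u).cramer v) := rfl

theorem mulVec_hbMul (u v : Fin (n + 1) → R) :
    X *ᵥ hbMul X u v = minorForm X u • v - minorForm X v • u := by
  have h := mulVec_cramer (augment X u) v
  have h0 : (augment X u).cramer v 0 = minorForm X v := by
    rw [cramer_apply, ← det_augment]
    congr 1
    ext i j
    refine Fin.cases ?_ (fun j => ?_) j <;> simp [augment]
  rw [augment_mulVec, det_augment, h0, ← hbMul_apply] at h
  exact eq_sub_of_add_eq' h

theorem hbMul_mulVec (u : Fin (n + 1) → R) (w : Fin n → R) :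
    hbMul X u (X *ᵥ w) = minorForm X u • w := by
  have h : X *ᵥ w = augment X u *ᵥ Fin.cons 0 w := by simp [augment_mulVec]
  rw [hbMul_apply, h, cramer_augment_mulVec]
  rfl

theorem isAlt_hbMul : (hbMul X).IsAlt := fun u => by
  have hu : augment X u *ᵥ Fin.cons 1 0 = u := by simp [augment_mulVec]
  have h := cramer_augment_mulVec X u (Fin.cons 1 0)
  rw [hu] at h
  ext c
  simp [hbMul_apply, h, Fin.tail]

@[simp]
theorem minorForm_mulVec (w : Fin n → R) : minorForm X (X *ᵥ w) = 0 := by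
  have h := mulVec_hbMul X (Pi.single 0 1) (X *ᵥ w)
  rw [hbMul_mulVec, mulVec_smul, eq_comm, sub_eq_self] at h
  simpa using congrFun h 0

variable {X} {I : Ideal R}

theorem hbMul_mem_pow (hX : ∀ i c, X i c ∈ I) (u v : Fin (n + 1) → R) (c : Fin n) :
    hbMul X u v c ∈ I ^ (n - 1) := by
  have h : ((augment X u).updateCol c.succ v).det ∈ I ^ ({0, c.succ}ᶜ : Finset (Fin _)).card := by
    refine det_mem_pow_card fun j hj i => ?_
    obtain ⟨hj0, hjc⟩ : j ≠ 0 ∧ j ≠ c.succ := by simpa using hj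
    obtain ⟨j, rfl⟩ := Fin.exists_succ_eq.2 hj0
    simpa [updateCol_apply, hjc, augment] using hX i j
  rw [Finset.card_compl, Finset.card_pair (Fin.succ_ne_zero c).symm, Fintype.card_fin] at h
  exact h

theorem signedMinor_mem_pow (hX : ∀ i c, X i c ∈ I) (i : Fin (n + 1)) :
    signedMinor X i ∈ I ^ n := by
  have h : (X.submatrix i.succAbove id).det ∈ I ^ (Finset.univ : Finset (Fin n)).card :=
    det_mem_pow_card fun j _ k => hX (i.succAbove k) j
  rw [Finset.card_univ, Fintype.card_fin] at h
  exact Ideal.mul_mem_left _ _ h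

theorem injective_mulVec {u : Fin (n + 1) → R} (hu : minorForm X u ∈ nonZeroDivisors R) :
    Injective X.mulVecLin := by
  refine (injective_iff_map_eq_zero _).2 fun w hw => funext fun c => ?_
  have h := hbMul_mulVec X u w
  rw [show X *ᵥ w = 0 from hw, map_zero] at h
  exact (mul_left_mem_nonZeroDivisors_eq_zero_iff hu).1 (congrFun h c).symm

theorem exact_of_minorForm_eq_pow {a : R} (ha : a ∈ nonZeroDivisors R)
    (hdvd : ∀ w, (∀ i, a ∣ (X *ᵥ w) i) → ∀ c, a ∣ w c) {u : Fin (n + 1) → R} {m : ℕ}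
    (hu : minorForm X u = a ^ m) : Exact X.mulVecLin (minorForm X) := by
  have cancel_pow : ∀ (m : ℕ) (v : Fin (n + 1) → R), a ^ m • v ∈ Set.range X.mulVecLin →
      v ∈ Set.range X.mulVecLin := by
    intro m
    induction m with
    | zero => simp
    | succ m ih =>
      rintro v ⟨w, hw⟩
      choose w' hw' using hdvd w fun i => ⟨a ^ m * v i, by
        rw [← mul_assoc, ← pow_succ']; exact congrFun hw i⟩
      obtain rfl : w = a • w' := funext hw'
      refine ih v ⟨w', funext fun i => (mul_cancel_left_mem_nonZeroDivisors ha).1 ?_⟩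
      rw [map_smul] at hw
      simpa [pow_succ', mul_assoc] using congrFun hw i
  refine LinearMap.exact_iff.2 (le_antisymm (fun v hv => cancel_pow m v ⟨hbMul X u v, ?_⟩) ?_)
  · simp [mulVec_hbMul, hu, show minorForm X v = 0 from hv]
  · rintro _ ⟨w, rfl⟩
    exact minorForm_mulVec X w

end HilbertBurch

section Quotient

variable {R S : Type*} [CommRing R] [CommRing S] {n : ℕ} {X : Matrix (Fin (n + 1)) (Fin n) R}

theorem signedMinor_map (f : R →+* S) (i : Fin (n + 1)) :
    signedMinor (X.map f) i = f (signedMinor X i) := by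
  simp [signedMinor, submatrix_map, RingHom.map_det]

theorem minorForm_map (f : R →+* S) (u : Fin (n + 1) → R) :
    minorForm (X.map f) (f ∘ u) = f (minorForm X u) := by
  simp [minorForm_apply, signedMinor_map]

theorem mem_range_minorForm_of_mul_mem {t : R} (ht : t ∈ nonZeroDivisors R)
    (hX : Exact (X.map (Ideal.Quotient.mk (Ideal.span {t}))).mulVecLin
      (minorForm (X.map (Ideal.Quotient.mk (Ideal.span {t}))))) {r : R}
    (hr : t * r ∈ LinearMap.range (minorForm X)) : r ∈ LinearMap.range (minorForm X) := by
  set f := Ideal.Quotient.mk (Ideal.span {t})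
  have hf : ∀ a, f a = 0 ↔ t ∣ a := fun a => by
    rw [Ideal.Quotient.eq_zero_iff_mem, Ideal.mem_span_singleton]
  obtain ⟨v, hv⟩ := hr
  obtain ⟨w, hw⟩ := (hX (f ∘ v)).1 (by rw [minorForm_map, hv, hf]; exact dvd_mul_right t r)
  choose g hg using fun c => Ideal.Quotient.mk_surjective (w c)
  obtain rfl : f ∘ g = w := funext hg
  choose u hu using fun i => (hf (v i - (X *ᵥ g) i)).1 (by
    rw [map_sub, sub_eq_zero, RingHom.map_mulVec]
    exact (congrFun hw i).symm)
  obtain rfl : v = X *ᵥ g + t • u := funext fun i => eq_add_of_sub_eq' (hu i)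
  refine ⟨u, (mul_cancel_left_mem_nonZeroDivisors ht).1 ?_⟩
  simpa using hv

theorem mem_of_pow_mul_mem {J : Ideal R} {t : R} (h : ∀ {r}, t * r ∈ J → r ∈ J) (m : ℕ) {r : R}
    (hr : t ^ m * r ∈ J) : r ∈ J := by
  induction m with
  | zero => simpa using hr
  | succ m ih => exact ih (h (by rwa [← mul_assoc, ← pow_succ']))

end Quotient

section Cone

variable {R : Type*} [CommRing R] {n : ℕ} (X : Matrix (Fin (n + 1)) (Fin n) R) (z : R)

/-- The first differential of the cone of multiplication by `z` on the Hilbert-Burch complex. -/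
def coneD₁ : ((Fin (n + 1) → R) × R) →ₗ[R] R := (minorForm X).coprod (LinearMap.lsmul R R z)

/-- The second differential of the cone of multiplication by `z` on the Hilbert-Burch complex. -/
def coneD₂ : ((Fin (n + 1) → R) × (Fin n → R)) →ₗ[R] (Fin (n + 1) → R) × R :=
  ((LinearMap.lsmul R _ z).coprod X.mulVecLin).prod (-minorForm X ∘ₗ LinearMap.fst R _ _)

/-- The third differential of the cone of multiplication by `z` on the Hilbert-Burch complex. -/
def coneD₃ : (Fin n → R) →ₗ[R] (Fin (n + 1) → R) × (Fin n → R) :=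
  (-X.mulVecLin).prod (LinearMap.lsmul R _ z)

/-- The product on the cone of multiplication by `z` on the Hilbert-Burch complex. -/
def coneMul : ((Fin (n + 1) → R) × R) →ₗ[R] ((Fin (n + 1) → R) × R) →ₗ[R]
    (Fin (n + 1) → R) × (Fin n → R) :=
  LinearMap.mk₂ R (fun a b => (a.2 • b.1 - b.2 • a.1, hbMul X a.1 b.1))
    (fun _ _ _ => Prod.ext (by simp only [Prod.fst_add, Prod.snd_add]; module) (by simp))
    (fun _ _ _ => Prod.ext (by simp only [Prod.smul_fst, Prod.smul_snd, smul_eq_mul]; module)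
      (by simp))
    (fun _ _ _ => Prod.ext (by simp only [Prod.fst_add, Prod.snd_add]; module) (by simp))
    (fun _ _ _ => Prod.ext (by simp only [Prod.smul_fst, Prod.smul_snd, smul_eq_mul]; module)
      (by simp))

theorem coneD₁_apply (a : (Fin (n + 1) → R) × R) :
    coneD₁ X z a = minorForm X a.1 + z * a.2 := rfl

theorem coneD₂_apply (v : (Fin (n + 1) → R) × (Fin n → R)) :
    coneD₂ X z v = (z • v.1 + X *ᵥ v.2, -minorForm X v.1) := rfl

theorem coneD₃_apply (w : Fin n → R) : coneD₃ X z w = (-(X *ᵥ w), z • w) := rfl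

theorem coneMul_apply (a b : (Fin (n + 1) → R) × R) :
    coneMul X a b = (a.2 • b.1 - b.2 • a.1, hbMul X a.1 b.1) := rfl

/-- The Hilbert-Burch complex of `X` is exact and `z` is regular modulo the maximal minors of
`X`. -/
structure IsRegularCone : Prop where
  exact : Exact X.mulVecLin (minorForm X)
  injective : Injective X.mulVecLin
  mem_of_mul_mem : ∀ {c}, z * c ∈ LinearMap.range (minorForm X) →
    c ∈ LinearMap.range (minorForm X)

variable {X z} (h : IsRegularCone X z)

namespace IsRegularCone

include h

theorem exact_coneD₂_coneD₁ : Exact (coneD₂ X z) (coneD₁ X z) := by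
  rintro ⟨a, c⟩
  refine ⟨fun (hac : minorForm X a + z * c = 0) => ?_, ?_⟩
  · obtain ⟨u, rfl⟩ := h.mem_of_mul_mem (c := c)
      ⟨-a, by rw [map_neg]; exact neg_eq_of_add_eq_zero_right hac⟩
    obtain ⟨w, hw⟩ := (h.exact (a + z • u)).1 (by simpa using hac)
    exact ⟨(-u, w), by simp [coneD₂_apply, show X *ᵥ w = _ from hw]⟩
  · rintro ⟨v, hv⟩
    simp [← hv, coneD₁_apply, coneD₂_apply]

theorem exact_coneD₃_coneD₂ : Exact (coneD₃ X z) (coneD₂ X z) := by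
  rintro ⟨u, w⟩
  refine ⟨fun huw => ?_, ?_⟩
  · obtain ⟨hu, hΔ⟩ : z • u + X *ᵥ w = 0 ∧ -minorForm X u = 0 := by
      simpa [coneD₂_apply] using huw
    obtain ⟨g, rfl⟩ := (h.exact u).1 (by simpa using hΔ)
    obtain rfl : w = -(z • g) := h.injective (by
      simpa [mulVec_smul, mulVec_neg] using eq_neg_of_add_eq_zero_right hu)
    exact ⟨-g, by simp [coneD₃_apply, mulVec_neg]⟩
  · rintro ⟨w, hw⟩
    simp [← hw, coneD₂_apply, coneD₃_apply, mulVec_smul]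

end IsRegularCone

theorem coneD₂_coneMul (a b : (Fin (n + 1) → R) × R) :
    coneD₂ X z (coneMul X a b) = coneD₁ X z a • b - coneD₁ X z b • a := by
  refine Prod.ext ?_ ?_
  · simp only [coneD₂_apply, coneMul_apply, coneD₁_apply, mulVec_hbMul, Prod.fst_sub,
      Prod.smul_fst]
    module
  · simp only [coneD₂_apply, coneMul_apply, coneD₁_apply, Prod.snd_sub, Prod.smul_snd,
      smul_eq_mul, map_sub, map_smul]
    ring

/-- The resolution of `R ⧸ (I_n(X) + (z))` by the cone of multiplication by `z` on the
Hilbert-Burch resolution of `X`. -/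
def hilbertBurchCone (h : IsRegularCone X z) :
    DGResolution (LinearMap.range (coneD₁ X z)) ((Fin (n + 1) → R) × R)
      ((Fin (n + 1) → R) × (Fin n → R)) (Fin n → R) where
  d₁ := coneD₁ X z
  d₂ := coneD₂ X z
  d₃ := coneD₃ X z
  mul := coneMul X
  range_d₁ := rfl
  exact₁ := h.exact_coneD₂_coneD₁
  exact₂ := h.exact_coneD₃_coneD₂
  injective_d₃ _ _ hvw := h.injective (neg_injective (congrArg Prod.fst hvw))
  d₂_mul := coneD₂_coneMul
  isAlt_mul a := by simp [coneMul_apply, isAlt_hbMul X _]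

theorem hilbertBurchCone_mul₁₂ (a : (Fin (n + 1) → R) × R)
    (v : (Fin (n + 1) → R) × (Fin n → R)) :
    (hilbertBurchCone h).mul₁₂ a v = a.2 • v.2 - hbMul X a.1 v.1 := by
  rw [DGResolution.mul₁₂_eq_iff]
  refine Prod.ext ?_ ?_
  · simp only [hilbertBurchCone, coneD₃_apply, coneD₁_apply, coneD₂_apply, coneMul_apply,
      mulVec_sub, mulVec_smul, mulVec_hbMul, Prod.fst_sub, Prod.smul_fst]
    module
  · simp only [hilbertBurchCone, coneD₃_apply, coneD₁_apply, coneD₂_apply, coneMul_apply,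
      map_add, map_smul, hbMul_mulVec, Prod.snd_sub, Prod.smul_snd]
    module

end Cone

section ConeLocal

variable {R : Type*} [CommRing R] [IsLocalRing R] {n : ℕ} {X : Matrix (Fin (n + 1)) (Fin n) R}
  {z : R} (h : IsRegularCone X z) (hXm : ∀ i c, X i c ∈ maximalIdeal R)

include hXm

theorem minorForm_mem_pow (u : Fin (n + 1) → R) : minorForm X u ∈ maximalIdeal R ^ n :=
  minorForm_apply X u ▸ sum_mem fun i _ => Ideal.mul_mem_left _ _ (signedMinor_mem_pow hXm i)

theorem mulVec_mem (w : Fin n → R) :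
    X *ᵥ w ∈ maximalIdeal R • (⊤ : Submodule R (Fin (n + 1) → R)) :=
  mem_smul_top_pi_iff.2 fun _ => mulVec_apply_mem fun _ => Ideal.mul_mem_right _ _ (hXm _ _)

theorem isMinimal_hilbertBurchCone (hn : n ≠ 0) (hzm : z ∈ maximalIdeal R) :
    (hilbertBurchCone h).IsMinimal where
  d₁_mem v := add_mem (Ideal.pow_le_self hn (minorForm_mem_pow hXm _)) (Ideal.mul_mem_right _ _ hzm)
  d₂_mem v := mem_smul_top_prod_iff.2 ⟨add_mem (smul_mem_smul_top hzm _) (mulVec_mem hXm _), by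
    simpa [hilbertBurchCone, coneD₂_apply] using Ideal.pow_le_self hn (minorForm_mem_pow hXm v.1)⟩
  d₃_mem w := mem_smul_top_prod_iff.2 ⟨neg_mem (mulVec_mem hXm w), smul_mem_smul_top hzm w⟩

theorem hasTorProduct_hilbertBurchCone (hn : 2 ≤ n) :
    (hilbertBurchCone h).HasTorProduct (.snd R _ _) (.inl R _ _ ∘ₗ .fst R _ _)
      (.snd R _ _) where
  mul_modEq a b := SModEq.sub_mem.2 (mem_smul_top_prod_iff.2
    ⟨by simp [hilbertBurchCone, coneMul_apply], by
      simpa [hilbertBurchCone, coneMul_apply] using mem_smul_top_pi_iff.2 fun c =>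
        Ideal.pow_le_self (by omega) (hbMul_mem_pow hXm a.1 b.1 c)⟩)
  mul₁₂_modEq a v := SModEq.sub_mem.2 (by
    simpa [hilbertBurchCone_mul₁₂] using mem_smul_top_pi_iff.2 fun c =>
      Ideal.pow_le_self (by omega) (hbMul_mem_pow hXm a.1 v.1 c))

end ConeLocal

section Splitting

variable {R ι γ : Type*} [CommRing R] {f : γ → ι}

/-- An injection `f` identifies the disjoint union of the complement of its range and its domain
with its codomain. -/
noncomputable def splitEquiv (hf : Injective f) : {i // i ∉ Set.range f} ⊕ γ ≃ ι :=
  open scoped Classical in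
  (Equiv.sumComm _ _).trans (((Equiv.ofInjective f hf).sumCongr (.refl _)).trans
    (Equiv.sumCompl (· ∈ Set.range f)))

/-- The decomposition of a free module with basis indexed by `ι` into the summand indexed by the
range of an injection `f` and its complement. -/
noncomputable def splitFun (R : Type*) [CommRing R] (hf : Injective f) :
    (ι → R) ≃ₗ[R] ({i // i ∉ Set.range f} → R) × (γ → R) :=
  LinearEquiv.funCongrLeft R R (splitEquiv hf) ≪≫ₗ
    LinearEquiv.sumArrowLequivProdArrow {i // i ∉ Set.range f} γ R R

variable (hf : Injective f)

theorem splitFun_apply (v : ι → R) : splitFun R hf v = (fun i => v i.1, v ∘ f) := rfl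

theorem splitFun_symm_apply (u : ({i // i ∉ Set.range f} → R) × (γ → R)) (g : γ) :
    (splitFun R hf).symm u (f g) = u.2 g :=
  congrFun (congrArg Prod.snd ((splitFun R hf).apply_symm_apply u)) g

theorem splitFun_symm_single_left [DecidableEq ι] (i : {i // i ∉ Set.range f}) :
    (splitFun R hf).symm (Pi.single i (1 : R), 0) = Pi.single i.1 (1 : R) := by
  rw [LinearEquiv.symm_apply_eq, splitFun_apply]
  refine Prod.ext (funext fun j => ?_) (funext fun g => ?_)
  · simp [Pi.single_apply, Subtype.ext_iff]
  · exact (Pi.single_eq_of_ne (M := fun _ : ι => R) (fun h => i.2 ⟨g, h⟩) 1).symm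

variable (R ι)

/-- Coordinates on `(ι → R) × R`, the last one being indexed by `none`. -/
def optionCoord : ((ι → R) × R) ≃ₗ[R] (Option ι → R) :=
  LinearEquiv.prodComm R (ι → R) R ≪≫ₗ (LinearEquiv.piOptionEquivProd R (M := fun _ => R)).symm

variable {R ι}

theorem linearCombination_comp_splitFun_symm [Fintype ι] [Fintype γ]
    [Fintype {i // i ∉ Set.range f}] (hf : Injective f) (φ : ι → R) :
    Fintype.linearCombination R φ ∘ₗ (splitFun R hf).symm.toLinearMap =
      (Fintype.linearCombination R fun i : {i // i ∉ Set.range f} => φ i).coprod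
        (Fintype.linearCombination R (φ ∘ f)) := by
  refine LinearMap.ext fun u => ?_
  obtain ⟨v, rfl⟩ := (splitFun R hf).surjective u
  simp only [LinearMap.comp_apply, LinearEquiv.coe_coe, LinearEquiv.symm_apply_apply,
    LinearMap.coprod_apply, Fintype.linearCombination_apply]
  rw [splitFun_apply, ← (splitEquiv hf).sum_comp, Fintype.sum_sum_type]
  rfl

theorem range_linearCombination_comp_trimIncl {x : Fin 3 → R} [Fintype ι] [Finite γ]
    (hf : Injective f) (φ : ι → R) : LinearMap.range ((Fintype.linearCombination R φ ∘ₗ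
      (splitFun R hf).symm.toLinearMap) ∘ₗ DGResolution.trimIncl x _ γ) =
        Ideal.span (φ '' (Set.range f)ᶜ) ⊔
          Ideal.span (Set.range x) * Ideal.span (φ '' Set.range f) := by
  classical
  have := Fintype.ofFinite γ
  have := Fintype.ofFinite {i // i ∉ Set.range f}
  have hcoprod : ((Fintype.linearCombination R fun i : {i // i ∉ Set.range f} => φ i).coprod
      (Fintype.linearCombination R (φ ∘ f))) ∘ₗ DGResolution.trimIncl x _ γ =
        (Fintype.linearCombination R fun i : {i // i ∉ Set.range f} => φ i).coprod
          (Fintype.linearCombination R (φ ∘ f) ∘ₗ kosz₁ x γ) := by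
    ext <;> simp [DGResolution.trimIncl]
  rw [linearCombination_comp_splitFun_symm, hcoprod, LinearMap.range_coprod, LinearMap.range_comp,
    range_kosz₁, Submodule.map_smul'', Submodule.map_top, Fintype.range_linearCombination,
    Fintype.range_linearCombination, Set.range_comp φ f, Set.image_eq_range φ (Set.range f)ᶜ]
  rfl

end Splitting

section Comparison

variable {R : Type*} [CommRing R] {x : Fin 3 → R} {n : ℕ} {X : Matrix (Fin (n + 1)) (Fin n) R}
  {z : R}

/-- Expressions of the entries of the matrix `X`, of `z` and of the maximal minors of `X` as linear
combinations of `x`. -/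
structure ConeDivision (x : Fin 3 → R) (X : Matrix (Fin (n + 1)) (Fin n) R) (z : R) where
  entry : Fin 3 → Matrix (Fin (n + 1)) (Fin n) R
  last : Fin 3 → R
  minor : Fin (n + 1) → Fin 3 → R
  sum_entry : ∀ i c, x ⬝ᵥ (fun l => entry l i c) = X i c
  dotProduct_last : x ⬝ᵥ last = z
  dotProduct_minor : ∀ i, x ⬝ᵥ minor i = signedMinor X i

namespace ConeDivision

variable (c : ConeDivision x X z)

theorem dotProduct_entry_mulVec (w : Fin n → R) (i : Fin (n + 1)) :
    x ⬝ᵥ (fun l => (c.entry l *ᵥ w) i) = (X *ᵥ w) i := by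
  simp only [mulVec, dotProduct, ← c.sum_entry, Finset.mul_sum, Finset.sum_mul]
  rw [Finset.sum_comm]
  simp only [mul_assoc]

/-- The comparison map in degree `2` from the cone of multiplication by `z` on the Hilbert-Burch
complex to the Koszul complexes belonging to all generators, the last generator being indexed by
`none`. -/
def comparison₂ :
    ((Fin (n + 1) → R) × (Fin n → R)) →ₗ[R] (Option (Fin (n + 1)) × Fin 3 → R) where
  toFun v p := p.1.elim (-(v.1 ⬝ᵥ fun j => c.minor j p.2))
    fun i => v.1 i * c.last p.2 + (c.entry p.2 *ᵥ v.2) i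
  map_add' v w := by
    ext ⟨_ | i, l⟩
    · simp [add_comm]
    · simp only [Prod.fst_add, Prod.snd_add, Pi.add_apply, mulVec_add, Option.elim_some]
      ring
  map_smul' r v := by
    ext ⟨_ | i, l⟩ <;> simp [mulVec_smul, mul_add, mul_assoc]

/-- The comparison map in degree `3` for the generators other than the last one. -/
def comparison₃ : (Fin n → R) →ₗ[R] (Option (Fin (n + 1)) × Fin 3 → R) :=
  LinearMap.pi fun p => p.1.elim 0 fun i => LinearMap.proj p.2 ∘ₗ crossProduct.flip c.last ∘ₗ
    LinearMap.pi fun l => LinearMap.proj i ∘ₗ (c.entry l).mulVecLin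

theorem comparison₂_none (v : (Fin (n + 1) → R) × (Fin n → R)) (l : Fin 3) :
    c.comparison₂ v (none, l) = -(v.1 ⬝ᵥ fun j => c.minor j l) := rfl

theorem comparison₂_some (v : (Fin (n + 1) → R) × (Fin n → R)) (i : Fin (n + 1)) (l : Fin 3) :
    c.comparison₂ v (some i, l) = v.1 i * c.last l + (c.entry l *ᵥ v.2) i := rfl

theorem comparison₃_some (w : Fin n → R) (i : Fin (n + 1)) :
    (fun l => c.comparison₃ w (some i, l)) = (fun l => (c.entry l *ᵥ w) i) ⨯₃ c.last := rfl

theorem kosz₁_comparison₂ (v : (Fin (n + 1) → R) × (Fin n → R)) :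
    kosz₁ x _ (c.comparison₂ v) = optionCoord R _ (coneD₂ X z v) := by
  ext o
  rw [kosz₁_apply]
  cases o with
  | none =>
    calc (x ⬝ᵥ fun l => c.comparison₂ v (none, l))
        = -(x ⬝ᵥ fun l => ∑ i, v.1 i * c.minor i l) := by
          simp only [comparison₂_none, dotProduct, mul_neg, Finset.sum_neg_distrib]
      _ = -∑ i, v.1 i * (x ⬝ᵥ c.minor i) := by
          simp only [dotProduct, Finset.mul_sum]
          rw [Finset.sum_comm]
          simp only [mul_left_comm]
      _ = -minorForm X v.1 := by simp only [c.dotProduct_minor, minorForm_apply]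
  | some i =>
    calc (x ⬝ᵥ fun l => c.comparison₂ v (some i, l))
        = x ⬝ᵥ (v.1 i • c.last + fun l => (c.entry l *ᵥ v.2) i) := rfl
      _ = z * v.1 i + (X *ᵥ v.2) i := by
          rw [dotProduct_add, dotProduct_smul, c.dotProduct_last, c.dotProduct_entry_mulVec,
            smul_eq_mul, mul_comm]

theorem cross_comparison₃_some (w : Fin n → R) (i : Fin (n + 1)) :
    x ⨯₃ (fun l => c.comparison₃ w (some i, l)) =
      fun l => c.comparison₂ (coneD₃ X z w) (some i, l) := by
  have h := c.dotProduct_entry_mulVec w i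
  rw [comparison₃_some, cross_cross_eq_smul_sub_smul', c.dotProduct_last, dotProduct_comm, h]
  ext l
  simp only [comparison₂_some, coneD₃_apply, mulVec_smul, Pi.sub_apply, Pi.smul_apply,
    Pi.neg_apply, smul_eq_mul]
  ring

end ConeDivision
end Comparison

section SplitCone

variable {R B γ : Type*} [CommRing R] {x : Fin 3 → R} {n : ℕ}
  {X : Matrix (Fin (n + 1)) (Fin n) R} {z : R} {ρ : B → Option (Fin (n + 1))} {col : γ → Fin n}

/-- Coordinates in degree `1` of `hilbertBurchCone` that split off the generators indexed by `ρ`. -/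
noncomputable def coneCoord₁ (R : Type*) [CommRing R] (hρ : Injective ρ) :
    ((Fin (n + 1) → R) × R) ≃ₗ[R] ({o // o ∉ Set.range ρ} → R) × (B → R) :=
  optionCoord R (Fin (n + 1)) ≪≫ₗ splitFun R hρ

/-- Coordinates in degree `2` of `hilbertBurchCone` that split off the basis elements of the second
summand indexed by `col`. -/
noncomputable def coneCoord₂ (R : Type*) [CommRing R] (hcol : Injective col) :
    ((Fin (n + 1) → R) × (Fin n → R)) ≃ₗ[R]
      ((Fin (n + 1) → R) × ({j // j ∉ Set.range col} → R)) × (γ → R) :=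
  DGResolution.splitRight (Fin (n + 1) → R) (splitFun R hcol)

theorem coneCoord₁_symm_apply (hρ : Injective ρ)
    (a : ({o // o ∉ Set.range ρ} → R) × (B → R)) : (coneCoord₁ R hρ).symm a =
      (fun i => (splitFun R hρ).symm a (some i), (splitFun R hρ).symm a none) := rfl

theorem coneCoord₂_symm_apply (hcol : Injective col)
    (v : ((Fin (n + 1) → R) × ({j // j ∉ Set.range col} → R)) × (γ → R)) :
    (coneCoord₂ R hcol).symm v = (v.1.1, (splitFun R hcol).symm (v.1.2, v.2)) := rfl

theorem snd_coneCoord₁_symm_apply_inl (hρ : Injective ρ) (hnone : none ∈ Set.range ρ)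
    (a : {o // o ∉ Set.range ρ} → R) : ((coneCoord₁ R hρ).symm (a, 0)).2 = 0 := by
  obtain ⟨b, hb⟩ := hnone
  rw [coneCoord₁_symm_apply, ← hb]
  exact splitFun_symm_apply hρ (a, 0) b

/-- The resolution `hilbertBurchCone` in the coordinates `coneCoord₁` and `coneCoord₂`. -/
noncomputable def splitCone (h : IsRegularCone X z) (hρ : Injective ρ) (hcol : Injective col) :
    DGResolution (LinearMap.range (coneD₁ X z)) (({o // o ∉ Set.range ρ} → R) × (B → R))
      (((Fin (n + 1) → R) × ({j // j ∉ Set.range col} → R)) × (γ → R)) (Fin n → R) :=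
  (hilbertBurchCone h).congr (coneCoord₁ R hρ) (coneCoord₂ R hcol) (.refl R _)

theorem range_splitCone_d₁_comp_trimIncl [Finite B] (h : IsRegularCone X z) (hρ : Injective ρ)
    (hcol : Injective col) :
    LinearMap.range ((splitCone h hρ hcol).d₁ ∘ₗ DGResolution.trimIncl x _ B) =
      Ideal.span ((fun o => o.elim z (signedMinor X)) '' (Set.range ρ)ᶜ) ⊔
        Ideal.span (Set.range x) *
          Ideal.span ((fun o => o.elim z (signedMinor X)) '' Set.range ρ) := by
  have hd₁ : (splitCone h hρ hcol).d₁ =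
      Fintype.linearCombination R (fun o => o.elim z (signedMinor X)) ∘ₗ
        (splitFun R hρ).symm.toLinearMap := by
    refine LinearMap.ext fun a => ?_
    obtain ⟨v, rfl⟩ := (splitFun R hρ).surjective a
    simp [splitCone, DGResolution.congr, hilbertBurchCone, coneCoord₁_symm_apply, coneD₁_apply,
      minorForm_apply, Fintype.linearCombination_apply, Fintype.sum_option, add_comm, mul_comm]
  rw [hd₁, range_linearCombination_comp_trimIncl]

namespace ConeDivision

variable (c : ConeDivision x X z)

/-- The paper's `Q₁` for the generators indexed by `ρ`. -/
noncomputable def splitComparison₂ (ρ : B → Option (Fin (n + 1))) (hcol : Injective col) :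
    (((Fin (n + 1) → R) × ({j // j ∉ Set.range col} → R)) × (γ → R)) →ₗ[R] (B × Fin 3 → R) :=
  LinearMap.funLeft R R (Prod.map ρ id) ∘ₗ c.comparison₂ ∘ₗ (coneCoord₂ R hcol).symm.toLinearMap

theorem splitComparison₂_apply (hcol : Injective col)
    (v : ((Fin (n + 1) → R) × ({j // j ∉ Set.range col} → R)) × (γ → R)) (p : B × Fin 3) :
    c.splitComparison₂ ρ hcol v p =
      c.comparison₂ (v.1.1, (splitFun R hcol).symm (v.1.2, v.2)) (ρ p.1, p.2) := rfl

theorem kosz₁_splitComparison₂ (h : IsRegularCone X z) (hρ : Injective ρ) (hcol : Injective col)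
    (v : ((Fin (n + 1) → R) × ({j // j ∉ Set.range col} → R)) × (γ → R)) :
    kosz₁ x B (c.splitComparison₂ ρ hcol v) = ((splitCone h hρ hcol).d₂ v).2 :=
  funext fun b => congrFun (c.kosz₁_comparison₂ _) (ρ b)

theorem splitComparison₂_splitCone_d₃ (h : IsRegularCone X z) (hρ : Injective ρ)
    (hcol : Injective col) (w : Fin n → R) :
    c.splitComparison₂ ρ hcol ((splitCone h hρ hcol).d₃ w) =
      LinearMap.funLeft R R (Prod.map ρ id) (c.comparison₂ (coneD₃ X z w)) := by
  simp [splitComparison₂, splitCone, DGResolution.congr, hilbertBurchCone]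

theorem kosz₂_comparison₃ (h : IsRegularCone X z) (hρ : Injective ρ) (hcol : Injective col)
    (hnone : none ∉ Set.range ρ) (w : Fin n → R) :
    kosz₂ x B (LinearMap.funLeft R R (Prod.map ρ id) (c.comparison₃ w)) =
      c.splitComparison₂ ρ hcol ((splitCone h hρ hcol).d₃ w) := by
  rw [splitComparison₂_splitCone_d₃]
  refine fibers_ext fun b => ?_
  rw [kosz₂_apply]
  obtain ⟨i, hi⟩ := Option.ne_none_iff_exists'.1 fun hb => hnone ⟨b, hb⟩
  simpa [LinearMap.funLeft_apply, hi] using c.cross_comparison₃_some w i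

end ConeDivision
end SplitCone

section Pivots

variable {R B γ : Type*} [CommRing R] [IsLocalRing R] {x : Fin 3 → R} {n : ℕ}
  {X : Matrix (Fin (n + 1)) (Fin n) R} {z : R}

namespace ConeDivision

/-- The coefficients of `z` and of the maximal minors lie in the square of the maximal ideal. -/
structure IsSmall (c : ConeDivision x X z) : Prop where
  last_mem_sq : ∀ l, c.last l ∈ maximalIdeal R ^ 2
  minor_mem_sq : ∀ i l, c.minor i l ∈ maximalIdeal R ^ 2

/-- The rows `piv` of `Q₁` are unit vectors, with the entry `1` in the columns `col`, and the other
columns of `Q₁` vanish modulo the maximal ideal. -/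
structure IsPivot (c : ConeDivision x X z) (ρ : B → Option (Fin (n + 1))) (col : γ → Fin n)
    (piv : γ → B × Fin 3) : Prop where
  injective : Injective piv
  entry_eq_single : ∀ g, ∃ i, ρ (piv g).1 = some i ∧
    c.entry (piv g).2 i = Pi.single (col g) 1
  entry_mem : ∀ b l i j, ρ b = some i → j ∉ Set.range col → c.entry l i j ∈ maximalIdeal R

variable {c : ConeDivision x X z} {ρ : B → Option (Fin (n + 1))} {col : γ → Fin n}
  {piv : γ → B × Fin 3}

theorem IsPivot.splitFun_splitComparison₂_snd (hp : c.IsPivot ρ col piv) (hcol : Injective col)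
    (r : γ → R) : (splitFun R hp.injective (c.splitComparison₂ ρ hcol (0, r))).2 = r := by
  funext g
  obtain ⟨i, hi, hrow⟩ := hp.entry_eq_single g
  calc c.splitComparison₂ ρ hcol (0, r) (piv g)
      = (c.entry (piv g).2 *ᵥ (splitFun R hcol).symm (0, r)) i := by
        simp [splitComparison₂_apply, hi, comparison₂_some]
    _ = r g := by rw [mulVec, hrow, single_one_dotProduct, splitFun_symm_apply]

namespace IsSmall

variable (hc : c.IsSmall)
include hc

theorem mem_sq : z ∈ maximalIdeal R ^ 2 :=
  c.dotProduct_last ▸ sum_mem fun l _ => Ideal.mul_mem_left _ _ (hc.last_mem_sq l)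

theorem signedMinor_mem_sq (i : Fin (n + 1)) : signedMinor X i ∈ maximalIdeal R ^ 2 :=
  c.dotProduct_minor i ▸ sum_mem fun l _ => Ideal.mul_mem_left _ _ (hc.minor_mem_sq i l)

theorem coneD₁_mem_sq (a : (Fin (n + 1) → R) × R) : coneD₁ X z a ∈ maximalIdeal R ^ 2 := by
  rw [coneD₁_apply, minorForm_apply]
  exact add_mem (sum_mem fun i _ => Ideal.mul_mem_left _ _ (hc.signedMinor_mem_sq i))
    (Ideal.mul_mem_right _ _ hc.mem_sq)

theorem comparison₂_apply_mem {I : Ideal R} (hI : maximalIdeal R ^ 2 ≤ I)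
    {v : (Fin (n + 1) → R) × (Fin n → R)} {p : Option (Fin (n + 1)) × Fin 3}
    (hv : ∀ i, p.1 = some i → (c.entry p.2 *ᵥ v.2) i ∈ I) : c.comparison₂ v p ∈ I := by
  rcases p with ⟨_ | i, l⟩
  · rw [comparison₂_none]
    exact neg_mem (sum_mem fun i _ => Ideal.mul_mem_left _ _ (hI (hc.minor_mem_sq i l)))
  · rw [comparison₂_some]
    exact add_mem (Ideal.mul_mem_left _ _ (hI (hc.last_mem_sq l))) (hv i rfl)

theorem comparison₂_mem_sq {v : (Fin (n + 1) → R) × (Fin n → R)}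
    (hv : ∀ j, v.2 j ∈ maximalIdeal R ^ 2) : c.comparison₂ v ∈
      maximalIdeal R ^ 2 • (⊤ : Submodule R (Option (Fin (n + 1)) × Fin 3 → R)) :=
  mem_smul_top_pi_iff.2 fun _ => hc.comparison₂_apply_mem le_rfl fun _ _ =>
    mulVec_apply_mem fun j => Ideal.mul_mem_left _ _ (hv j)

theorem comparison₃_mem_sq (w : Fin n → R) : c.comparison₃ w ∈
    maximalIdeal R ^ 2 • (⊤ : Submodule R (Option (Fin (n + 1)) × Fin 3 → R)) := by
  refine mem_smul_top_pi_iff.2 ?_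
  rintro ⟨_ | i, l⟩
  · exact zero_mem _
  · exact mem_smul_top_pi_iff.1 (map_mem_smul_top (crossProduct fun l => (c.entry l *ᵥ w) i)
      (mem_smul_top_pi_iff.2 hc.last_mem_sq)) l

variable (hcol : Injective col)

theorem splitComparison₂_mem [Finite B] (hp : c.IsPivot ρ col piv)
    (v : (Fin (n + 1) → R) × ({j // j ∉ Set.range col} → R)) :
    c.splitComparison₂ ρ hcol (v, 0) ∈ maximalIdeal R • (⊤ : Submodule R (B × Fin 3 → R)) := by
  refine mem_smul_top_pi_iff.2 fun p => ?_
  rw [splitComparison₂_apply]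
  refine hc.comparison₂_apply_mem (Ideal.pow_le_self two_ne_zero) fun i hi =>
    mulVec_apply_mem fun j => ?_
  by_cases hj : j ∈ Set.range col
  · obtain ⟨g, rfl⟩ := hj
    simp [splitFun_symm_apply]
  · exact Ideal.mul_mem_right _ _ (hp.entry_mem _ _ _ _ hi hj)

theorem splitComparison₂_mul_mem_sq [Finite B] (hXm : ∀ i j, X i j ∈ maximalIdeal R) (hn : 3 ≤ n)
    (h : IsRegularCone X z) (hρ : Injective ρ)
    (a b : ({o // o ∉ Set.range ρ} → R) × (B → R)) :
    c.splitComparison₂ ρ hcol ((splitCone h hρ hcol).mul a b) ∈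
      maximalIdeal R ^ 2 • (⊤ : Submodule R (B × Fin 3 → R)) := by
  have hmul := map_mem_smul_top (LinearMap.funLeft R R (Prod.map ρ id))
    (hc.comparison₂_mem_sq (v := coneMul X ((coneCoord₁ R hρ).symm a) ((coneCoord₁ R hρ).symm b))
      fun j => Ideal.pow_le_pow_right (by omega) (hbMul_mem_pow hXm _ _ j))
  simpa [splitComparison₂, splitCone, DGResolution.congr, hilbertBurchCone] using hmul

theorem splitComparison₂_d₃_mem_sq [Finite B] (h : IsRegularCone X z) (hρ : Injective ρ)
    (w : Fin n → R) : c.splitComparison₂ ρ hcol ((splitCone h hρ hcol).d₃ w) ∈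
      maximalIdeal R ^ 2 • (⊤ : Submodule R (B × Fin 3 → R)) := by
  rw [splitComparison₂_splitCone_d₃]
  exact map_mem_smul_top _ (hc.comparison₂_mem_sq fun j => Ideal.mul_mem_right _ _ hc.mem_sq)

end IsSmall

end ConeDivision
end Pivots

section TrimmedCone

variable {R B γ : Type*} [CommRing R] [IsLocalRing R] {x : Fin 3 → R} {n : ℕ}
  {X : Matrix (Fin (n + 1)) (Fin n) R} {z : R} {ρ : B → Option (Fin (n + 1))} {col : γ → Fin n}
  (hXm : ∀ i j, X i j ∈ maximalIdeal R) (hn : 3 ≤ n) {h : IsRegularCone X z} {hρ : Injective ρ}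
  {hcol : Injective col}

section

include hXm hn

theorem isMinimal_splitCone (hzm : z ∈ maximalIdeal R) : (splitCone h hρ hcol).IsMinimal :=
  (isMinimal_hilbertBurchCone h hXm (by omega) hzm).congr ..

theorem hasTorProduct_splitCone : (splitCone h hρ hcol).HasTorProduct
    (.snd R (Fin (n + 1) → R) R ∘ₗ (coneCoord₁ R hρ).symm.toLinearMap)
    ((coneCoord₂ R hcol).toLinearMap ∘ₗ
      (.inl R (Fin (n + 1) → R) (Fin n → R) ∘ₗ .fst R (Fin (n + 1) → R) R) ∘ₗ
        (coneCoord₁ R hρ).symm.toLinearMap)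
    (.snd R (Fin (n + 1) → R) (Fin n → R) ∘ₗ (coneCoord₂ R hcol).symm.toLinearMap) :=
  (hasTorProduct_hilbertBurchCone h hXm (by omega)).congr ..

end

variable {c : ConeDivision x X z} (hc : c.IsSmall) {piv : γ → B × Fin 3}
  (hp : c.IsPivot ρ col piv) [Finite B] (hx : IsRegularTriple x)
  (hxm : Ideal.span (Set.range x) = maximalIdeal R)

include hXm hn hc hp hx hxm

theorem exists_isSmall_trimData_splitCone {Q : (Fin n → R) →ₗ[R] (B × Fin 3 → R)}
    (hQ : ∀ w, kosz₂ x B (Q w) = c.splitComparison₂ ρ hcol ((splitCone h hρ hcol).d₃ w))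
    (hQ_mem : ∀ w, Q w ∈ maximalIdeal R • (⊤ : Submodule R (B × Fin 3 → R)))
    (hQ_mul : ∀ a v, Q ((splitCone h hρ hcol).mul₁₂ (DGResolution.trimIncl x _ B a) v) ∈
      maximalIdeal R ^ 2 • (⊤ : Submodule R (B × Fin 3 → R))) :
    ∃ t : DGResolution.TrimData x (splitCone h hρ hcol),
      t.q = c.splitComparison₂ ρ hcol ∧ t.IsSmall :=
  DGResolution.exists_isSmall_trimData hx hxm (c.kosz₁_splitComparison₂ h hρ hcol) hQ
    (fun _ => hc.coneD₁_mem_sq _) (hc.splitComparison₂_mem hcol hp)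
    (hc.splitComparison₂_mul_mem_sq hcol hXm hn h hρ) hQ_mem hQ_mul

end TrimmedCone

section TrimmedProducts

variable {R B γ : Type*} [CommRing R] [IsLocalRing R] {x : Fin 3 → R} {n : ℕ}
  {X : Matrix (Fin (n + 1)) (Fin n) R} {z : R} {ρ : B → Option (Fin (n + 1))} {col : γ → Fin n}
  (hXm : ∀ i j, X i j ∈ maximalIdeal R) (hn : 3 ≤ n) {h : IsRegularCone X z} {hρ : Injective ρ}
  {hcol : Injective col} (hnone : none ∈ Set.range ρ) [Finite B]
  (hxm : Ideal.span (Set.range x) = maximalIdeal R)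

include hXm hn hnone hxm

theorem splitCone_mul₁₂_trimIncl_mem (a : ({o // o ∉ Set.range ρ} → R) × (B × Fin 3 → R))
    (v : ((Fin (n + 1) → R) × ({j // j ∉ Set.range col} → R)) × (γ → R)) :
    (splitCone h hρ hcol).mul₁₂ (DGResolution.trimIncl x _ B a) v ∈
      maximalIdeal R • (⊤ : Submodule R (Fin n → R)) := by
  have hmod := (map₂_modEq (splitCone h hρ hcol).mul₁₂ (DGResolution.trimIncl_modEq hxm a)
    (SModEq.refl v)).trans ((hasTorProduct_splitCone hXm hn).mul₁₂_modEq (a.1, 0) v)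
  refine SModEq.zero.1 (hmod.trans (SModEq.zero.2 ?_))
  simp [snd_coneCoord₁_symm_apply_inl hρ hnone]

end TrimmedProducts

section Golod

variable {R : Type} {B γ : Type*} [CommRing R] [IsLocalRing R] {x : Fin 3 → R} {n : ℕ}
  {X : Matrix (Fin (n + 1)) (Fin n) R} {z : R} {ρ : B → Option (Fin (n + 1))} {col : γ → Fin n}

theorem isGolodQuotient_trimmedCone [Finite B] (hx : IsRegularTriple x)
    (hxm : Ideal.span (Set.range x) = maximalIdeal R) (h : IsRegularCone X z)
    (hXm : ∀ i j, X i j ∈ maximalIdeal R) (hn : 3 ≤ n) {c : ConeDivision x X z} (hc : c.IsSmall)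
    (hρ : Injective ρ) (hcol : Injective col) {piv : γ → B × Fin 3} (hp : c.IsPivot ρ col piv)
    (hnone : none ∈ Set.range ρ) : IsGolodQuotient R
      (LinearMap.range ((splitCone h hρ hcol).d₁ ∘ₗ DGResolution.trimIncl x _ B)) := by
  obtain ⟨Q, hQ_mem, hQ⟩ := DGResolution.exists_comparison₃ hx
    (c.kosz₁_splitComparison₂ h hρ hcol) (hxm ▸ hc.splitComparison₂_d₃_mem_sq hcol h hρ)
  rw [hxm] at hQ_mem
  obtain ⟨t, htq, ht⟩ := exists_isSmall_trimData_splitCone hXm hn hc hp hx hxm hQ hQ_mem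
    fun a v => sq (maximalIdeal R) ▸ map_mem_mul_smul_top Q hQ_mem
      (splitCone_mul₁₂_trimIncl_mem hXm hn hnone hxm a v)
  have he : ∀ r, (splitFun R hp.injective (t.q (0, r))).2 = r := fun r =>
    htq ▸ hp.splitFun_splitComparison₂_snd hcol r
  have hD : (splitCone h hρ hcol).IsMinimal :=
    isMinimal_splitCone hXm hn (Ideal.pow_le_self two_ne_zero hc.mem_sq)
  have hT := DGResolution.TrimData.hasTorProduct_reduce ht hx hxm _ he hD
    (hasTorProduct_splitCone hXm hn)
  have hs : (LinearMap.snd R (Fin (n + 1) → R) R ∘ₗ (coneCoord₁ R hρ).symm.toLinearMap) ∘ₗ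
      .inl R ({o // o ∉ Set.range ρ} → R) (B → R) = 0 :=
    LinearMap.ext (snd_coneCoord₁_symm_apply_inl hρ hnone)
  rw [← LinearMap.comp_assoc _ (.inl R _ _), hs, LinearMap.zero_comp] at hT
  exact DGResolution.isGolodQuotient
    (DGResolution.TrimData.isMinimal_reduce ht hx hxm _ he hD) hT

end Golod

section TrimBases

variable (R : Type*) [CommRing R] {B γ P : Type*} {n : ℕ} {ρ : B → Option (Fin (n + 1))}
  {col : γ → Fin n}

/-- Separates the generator `none` from the others among those not indexed by `ρ`. -/
noncomputable def untrimmedEquiv (hnone : none ∉ Set.range ρ) :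
    {i // some i ∉ Set.range ρ} ⊕ Unit ≃ {o // o ∉ Set.range ρ} :=
  Equiv.ofBijective (Sum.elim (fun i => ⟨some i, i.2⟩) fun _ => ⟨none, hnone⟩) <| by
    refine ⟨?_, ?_⟩
    · rintro (i | _) (j | _) hij <;> simp_all [Subtype.ext_iff]
    · rintro ⟨_ | i, hi⟩
      exacts [⟨.inr (), rfl⟩, ⟨.inl ⟨i, hi⟩, rfl⟩]

theorem untrimmedEquiv_inl (hnone : none ∉ Set.range ρ) (i : {i // some i ∉ Set.range ρ}) :
    untrimmedEquiv hnone (.inl i) = ⟨some i, i.2⟩ := rfl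

theorem untrimmedEquiv_inr (hnone : none ∉ Set.range ρ) (u : Unit) :
    untrimmedEquiv hnone (.inr u) = ⟨none, hnone⟩ := rfl

/-- The basis in degree `1` of the reduced trimming complex. -/
noncomputable def trimBasis₁ [Finite P] (hnone : none ∉ Set.range ρ) :
    Module.Basis ({i // some i ∉ Set.range ρ} ⊕ Unit ⊕ P) R
      (({o // o ∉ Set.range ρ} → R) × (P → R)) :=
  ((Pi.basisFun R _).prod (Pi.basisFun R P)).reindex
    ((Equiv.sumAssoc ..).symm.trans ((untrimmedEquiv hnone).sumCongr (.refl P))).symm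

/-- The basis in degree `2` of the reduced trimming complex. -/
noncomputable def trimBasis₂ (P : Type*) [Finite P] (ρ : B → Option (Fin (n + 1)))
    (col : γ → Fin n) :
    Module.Basis ({i // some i ∉ Set.range ρ} ⊕ {j // j ∉ Set.range col} ⊕
      {i // ¬some i ∉ Set.range ρ} ⊕ P) R
        (((Fin (n + 1) → R) × ({j // j ∉ Set.range col} → R)) × (P → R)) :=
  open scoped Classical in
  (((Pi.basisFun R _).prod (Pi.basisFun R _)).prod (Pi.basisFun R P)).reindex
    ((Equiv.sumAssoc ..).symm.trans ((Equiv.sumSumSumComm ..).trans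
      (((Equiv.sumCompl fun i => some i ∉ Set.range ρ).sumCongr (.refl _)).trans
        (Equiv.sumAssoc ..).symm))).symm

/-- The basis in degree `3` of the reduced trimming complex. -/
noncomputable def trimBasis₃ (B : Type*) [Finite B] (col : γ → Fin n) :
    Module.Basis (Empty ⊕ {j // j ∉ Set.range col} ⊕ {j // ¬j ∉ Set.range col} ⊕ B) R
      ((Fin n → R) × (B → R)) :=
  open scoped Classical in
  ((Pi.basisFun R _).prod (Pi.basisFun R B)).reindex
    ((Equiv.emptySum ..).trans ((Equiv.sumAssoc ..).symm.trans
      ((Equiv.sumCompl fun j => j ∉ Set.range col).sumCongr (.refl B)))).symm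

end TrimBases

section BasisProducts

variable {R : Type*} [CommRing R] {B γ P : Type*} {n : ℕ} {ρ : B → Option (Fin (n + 1))}
  {col : γ → Fin n}

theorem coneCoord₁_symm_single_some (hρ : Injective ρ) (i : {i // some i ∉ Set.range ρ}) :
    (coneCoord₁ R hρ).symm (Pi.single ⟨some i.1, i.2⟩ 1, 0) = (Pi.single i.1 1, 0) := by
  rw [coneCoord₁_symm_apply, splitFun_symm_single_left]
  refine Prod.ext (funext fun j => ?_) (by simp)
  simp [Pi.single_apply]

theorem coneCoord₁_symm_single_none (hρ : Injective ρ) (hnone : none ∉ Set.range ρ) :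
    (coneCoord₁ R hρ).symm (Pi.single ⟨none, hnone⟩ 1, 0) = (0, 1) := by
  rw [coneCoord₁_symm_apply, splitFun_symm_single_left]
  exact Prod.ext (funext fun j => by simp) (by simp)

theorem coneCoord₂_apply_inl (hcol : Injective col) (u : Fin (n + 1) → R) :
    coneCoord₂ R hcol (u, 0) = ((u, 0), 0) := rfl

variable [Finite P]

theorem trimBasis₁_inl (hnone : none ∉ Set.range ρ) (i : {i // some i ∉ Set.range ρ}) :
    trimBasis₁ R (P := P) hnone (.inl i) = (Pi.single ⟨some i, i.2⟩ 1, 0) := by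
  simp [trimBasis₁, untrimmedEquiv_inl]

theorem trimBasis₁_unit (hnone : none ∉ Set.range ρ) :
    trimBasis₁ R (P := P) hnone (.inr (.inl ())) = (Pi.single ⟨none, hnone⟩ 1, 0) := by
  simp [trimBasis₁, untrimmedEquiv_inr]

theorem fst_trimBasis₁_inr (hnone : none ∉ Set.range ρ) (p : P) :
    (trimBasis₁ R hnone (.inr (.inr p))).1 = 0 := by
  simp [trimBasis₁]

theorem trimBasis₂_inl (i : {i // some i ∉ Set.range ρ}) :
    trimBasis₂ R P ρ col (.inl i) = ((Pi.single i.1 1, 0), 0) := by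
  simp [trimBasis₂]

theorem trimBasis₂_mid (j : {j // j ∉ Set.range col}) :
    trimBasis₂ R P ρ col (.inr (.inl j)) = ((0, Pi.single j 1), 0) := by
  simp [trimBasis₂]

theorem snd_fst_trimBasis₂_inr (a : {i // ¬some i ∉ Set.range ρ} ⊕ P) :
    (trimBasis₂ R P ρ col (.inr (.inr a))).1.2 = 0 := by
  rcases a with i | p <;> simp [trimBasis₂]

variable [Finite B]

theorem trimBasis₃_mid (j : {j // j ∉ Set.range col}) :
    trimBasis₃ R B col (.inr (.inl j)) = (Pi.single j.1 1, 0) := by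
  simp [trimBasis₃]

theorem isClassHBasis_trimBasis (hρ : Injective ρ) (hcol : Injective col)
    (hnone : none ∉ Set.range ρ) : DGResolution.IsClassHBasis
    ((.snd R (Fin (n + 1) → R) R ∘ₗ (coneCoord₁ R hρ).symm.toLinearMap) ∘ₗ
      .inl R ({o // o ∉ Set.range ρ} → R) (B → R) ∘ₗ .fst R _ (P → R))
    (.inl R _ (B × Fin 3 → R) ∘ₗ
      .fst R ((Fin (n + 1) → R) × ({j // j ∉ Set.range col} → R)) (γ → R) ∘ₗ
      ((coneCoord₂ R hcol).toLinearMap ∘ₗ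
        (.inl R (Fin (n + 1) → R) (Fin n → R) ∘ₗ .fst R (Fin (n + 1) → R) R) ∘ₗ
          (coneCoord₁ R hρ).symm.toLinearMap) ∘ₗ
        .inl R ({o // o ∉ Set.range ρ} → R) (B → R) ∘ₗ .fst R _ (P → R))
    (.inl R (Fin n → R) (B → R) ∘ₗ
      (.snd R (Fin (n + 1) → R) (Fin n → R) ∘ₗ (coneCoord₂ R hcol).symm.toLinearMap) ∘ₗ
        .inl R _ (γ → R) ∘ₗ .fst R _ (B × Fin 3 → R))
    (trimBasis₁ R hnone) (trimBasis₂ R (B × Fin 3) ρ col) (trimBasis₃ R B col) where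
  s_inl k := by simp [trimBasis₁_inl, coneCoord₁_symm_single_some]
  s_unit := by simp [trimBasis₁_unit, coneCoord₁_symm_single_none]
  s_inr p := by simp [fst_trimBasis₁_inr, Prod.mk_zero_zero]
  U_inl k := by
    simp [trimBasis₁_inl, trimBasis₂_inl, coneCoord₁_symm_single_some, coneCoord₂_apply_inl]
  U_inr p := by simp [fst_trimBasis₁_inr, Prod.mk_zero_zero]
  V_inl k := by simp [trimBasis₂_inl, coneCoord₂_symm_apply, Prod.mk_zero_zero]
  V_mid c := by
    simp [trimBasis₂_mid, trimBasis₃_mid, coneCoord₂_symm_apply, splitFun_symm_single_left]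
  V_inr a := by simp [coneCoord₂_symm_apply, snd_fst_trimBasis₂_inr, Prod.mk_zero_zero]

end BasisProducts

section ClassH

variable {R : Type} [CommRing R] [IsLocalRing R] {B γ : Type*} {x : Fin 3 → R} {n : ℕ}
  {X : Matrix (Fin (n + 1)) (Fin n) R} {z : R} {ρ : B → Option (Fin (n + 1))} {col : γ → Fin n}

theorem card_notMem_range {ι γ : Type*} [Finite ι] {f : γ → ι} (hf : Injective f) :
    Nat.card {i // i ∉ Set.range f} = Nat.card ι - Nat.card γ := by
  have := Finite.of_injective f hf
  rw [← Nat.card_congr (splitEquiv hf), Nat.card_sum, Nat.add_sub_cancel]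

theorem card_some_notMem_range (hρ : Injective ρ) (hnone : none ∉ Set.range ρ) :
    Nat.card {i // some i ∉ Set.range ρ} = n + 1 - Nat.card B := by
  have h := Nat.card_congr (untrimmedEquiv hnone)
  rw [card_notMem_range hρ, Nat.card_sum, Finite.card_option, Nat.card_fin,
    Nat.card_unique (α := Unit)] at h
  omega

theorem hasTorClassH_trimmedCone (hx : IsRegularTriple x)
    (hxm : Ideal.span (Set.range x) = maximalIdeal R) (h : IsRegularCone X z)
    (hXm : ∀ i j, X i j ∈ maximalIdeal R) (hn : 3 ≤ n) {c : ConeDivision x X z} (hc : c.IsSmall)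
    (hρ : Injective ρ) (hcol : Injective col) {piv : γ → B × Fin 3} (hp : c.IsPivot ρ col piv)
    (hnone : none ∉ Set.range ρ) : HasTorClassH R
      (LinearMap.range ((splitCone h hρ hcol).d₁ ∘ₗ DGResolution.trimIncl x _ B))
      (n + 1 - Nat.card B) (n - Nat.card γ) := by
  have := Finite.of_injective ρ hρ
  have := Finite.of_injective col hcol
  have hQ_mem (w : Fin n → R) :=
    map_mem_smul_top (LinearMap.funLeft R R (Prod.map ρ id)) (hc.comparison₃_mem_sq w)
  obtain ⟨t, htq, ht⟩ := exists_isSmall_trimData_splitCone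
    (Q := LinearMap.funLeft R R (Prod.map ρ id) ∘ₗ c.comparison₃) hXm hn hc hp hx hxm
    (c.kosz₂_comparison₃ h hρ hcol hnone)
    (fun w => Submodule.smul_mono_left (Ideal.pow_le_self two_ne_zero) (hQ_mem w))
    fun _ _ => hQ_mem _
  have he : ∀ r, (splitFun R hp.injective (t.q (0, r))).2 = r := fun r =>
    htq ▸ hp.splitFun_splitComparison₂_snd hcol r
  have hD : (splitCone h hρ hcol).IsMinimal :=
    isMinimal_splitCone hXm hn (Ideal.pow_le_self two_ne_zero hc.mem_sq)
  classical
  have := Fintype.ofFinite B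
  have := Fintype.ofFinite γ
  have hH := DGResolution.hasTorClassH (DGResolution.TrimData.isMinimal_reduce ht hx hxm _ he hD)
    (DGResolution.TrimData.hasTorProduct_reduce ht hx hxm _ he hD
      (hasTorProduct_splitCone hXm hn)) (isClassHBasis_trimBasis hρ hcol hnone)
  rwa [← Nat.card_eq_fintype_card, ← Nat.card_eq_fintype_card, card_some_notMem_range hρ hnone,
    card_notMem_range hcol, Nat.card_fin] at hH

end ClassH

section ComparisonRank

theorem rank_eq_card_of_pivots {K m ι γ : Type*} [CommRing K] [Nontrivial K] [Fintype ι]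
    [DecidableEq ι] {M : Matrix m ι K} {piv : γ → m} {col : γ → ι} (hcol : Injective col)
    (hrow : ∀ g, M (piv g) = Pi.single (col g) 1) (hzero : ∀ j ∉ Set.range col, M.col j = 0) :
    M.rank = Nat.card γ := by
  classical
  have := Finite.of_injective col hcol
  have := Fintype.ofFinite γ
  have hli : LinearIndependent K (M.col ∘ col) := by
    refine .of_comp (LinearMap.funLeft K K piv) ?_
    convert Pi.linearIndependent_single_one γ K using 1
    ext g g'
    simp [LinearMap.funLeft_apply, Matrix.col_apply, hrow, Pi.single_apply, hcol.eq_iff, eq_comm]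
  have hspan : Submodule.span K (Set.range M.col) =
      Submodule.span K (Set.range (M.col ∘ col)) := by
    refine le_antisymm (Submodule.span_le.2 ?_)
      (Submodule.span_mono (Set.range_comp_subset_range _ _))
    rintro _ ⟨j, rfl⟩
    by_cases hj : j ∈ Set.range col
    · obtain ⟨g, rfl⟩ := hj
      exact Submodule.subset_span ⟨g, rfl⟩
    · rw [hzero j hj]
      exact zero_mem _
  rw [rank_eq_finrank_span_cols, hspan, finrank_span_eq_card hli, Nat.card_eq_fintype_card]

namespace ConeDivision

variable {R B γ : Type*} [CommRing R] [IsLocalRing R] {x : Fin 3 → R} {n : ℕ}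
  {X : Matrix (Fin (n + 1)) (Fin n) R} {z : R} {c : ConeDivision x X z}
  {ρ : B → Option (Fin (n + 1))} {col : γ → Fin n} {piv : γ → B × Fin 3}

theorem IsSmall.mk_eq_mk_entry_mulVec (hc : c.IsSmall) (hx : IsRegularTriple x)
    (hxm : Ideal.span (Set.range x) = maximalIdeal R) {k : Fin 3 → R}
    {v : (Fin (n + 1) → R) × (Fin n → R)} {i : Fin (n + 1)}
    (hk : x ⬝ᵥ k = (X *ᵥ v.2 - z • v.1) i) (l : Fin 3) :
    Ideal.Quotient.mk (maximalIdeal R) (k l) =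
      Ideal.Quotient.mk (maximalIdeal R) ((c.entry l *ᵥ v.2) i) := by
  have hdiff : x ⬝ᵥ (k - ((fun l => (c.entry l *ᵥ v.2) i) - v.1 i • c.last)) = 0 := by
    rw [dotProduct_sub, dotProduct_sub, dotProduct_smul, hk, c.dotProduct_entry_mulVec,
      c.dotProduct_last]
    simp [mul_comm]
  have hmem := mem_smul_top_pi_iff.1 (mem_smul_top_of_dotProduct_eq_zero hx hdiff) l
  rw [hxm] at hmem
  refine Ideal.Quotient.eq.2 ?_
  have hlast := Ideal.mul_mem_left _ (v.1 i) (Ideal.pow_le_self two_ne_zero (hc.last_mem_sq l))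
  convert sub_mem hmem hlast using 1
  simp only [Pi.sub_apply, Pi.smul_apply, smul_eq_mul]
  ring

theorem IsPivot.rank_eq_card (hp : c.IsPivot ρ col piv) (hcol : Injective col) (hc : c.IsSmall)
    (hx : IsRegularTriple x) (hxm : Ideal.span (Set.range x) = maximalIdeal R)
    (hnone : none ∉ Set.range ρ)
    {q : B → ((Fin (n + 1) → R) × (Fin n → R)) →ₗ[R] (Fin 3 → R)}
    (hq : ∀ b i v, ρ b = some i → x ⬝ᵥ q b v = (X *ᵥ v.2 - z • v.1) i) :
    (Matrix.of fun (p : B × Fin 3) (j : Fin (n + 1) ⊕ Fin n) =>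
      Ideal.Quotient.mk (maximalIdeal R) (q p.1 (Sum.elim (fun a => (Pi.single a 1, 0))
        (fun c => (0, Pi.single c 1)) j) p.2)).rank = Nat.card γ := by
  have : Nontrivial (R ⧸ maximalIdeal R) := Ideal.Quotient.nontrivial_iff.2 (Ideal.IsPrime.ne_top')
  have hentry {b i} (hb : ρ b = some i) (l : Fin 3) (v : (Fin (n + 1) → R) × (Fin n → R)) :=
    hc.mk_eq_mk_entry_mulVec hx hxm (hq b i v hb) l
  refine rank_eq_card_of_pivots (piv := piv) (Sum.inr_injective.comp hcol) (fun g => ?_)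
    fun j hj => funext fun p => ?_
  · obtain ⟨i, hi, hrow⟩ := hp.entry_eq_single g
    ext (a | j)
    · simp [hentry hi]
    · simp [hentry hi, hrow, Pi.single_apply]
  · obtain ⟨i, hi⟩ := Option.ne_none_iff_exists'.1 fun hb => hnone ⟨p.1, hb⟩
    rcases j with a | j
    · simp [Matrix.col_apply, hentry hi]
    · have hj' : j ∉ Set.range col := fun ⟨g, hg⟩ => hj ⟨g, congrArg Sum.inr hg⟩
      simpa [Matrix.col_apply, hentry hi, Ideal.Quotient.eq_zero_iff_mem] using
        hp.entry_mem p.1 p.2 i j hi hj'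

end ConeDivision
end ComparisonRank

section TrimIdeal

variable {α : Type*} {n : ℕ} {σ : Finset (Fin (n + 2))}

/-- The index in `hilbertBurchCone` of a generator in `σ`. -/
def trimIndex (σ : Finset (Fin (n + 2))) : {i // i ∈ σ} → Option (Fin (n + 1)) :=
  fun i => finSuccEquivLast i.1

theorem trimIndex_injective : Injective (trimIndex σ) :=
  finSuccEquivLast.injective.comp Subtype.val_injective

theorem trimIndex_eq_some_iff {b : {i // i ∈ σ}} {i : Fin (n + 1)} :
    trimIndex σ b = some i ↔ b.1 = i.castSucc := by
  rw [← finSuccEquivLast_castSucc, trimIndex, finSuccEquivLast.injective.eq_iff]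

theorem range_trimIndex : Set.range (trimIndex σ) = finSuccEquivLast '' {i | i ∈ σ} := by
  rw [Set.image_eq_range]
  rfl

theorem none_mem_range_trimIndex : none ∈ Set.range (trimIndex σ) ↔ Fin.last (n + 1) ∈ σ := by
  rw [range_trimIndex, ← finSuccEquivLast_last, finSuccEquivLast.injective.mem_set_image]
  rfl

theorem dite_lt_eq_elim_finSuccEquivLast (f : Fin (n + 1) → α) (a : α) :
    (fun i : Fin (n + 2) => if h : (i : ℕ) < n + 1 then f ⟨i, h⟩ else a) =
      (fun o => o.elim a f) ∘ finSuccEquivLast := by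
  funext i
  induction i using Fin.lastCases with
  | last => simp
  | cast i => simp [i.isLt]

theorem trimIdeal_eq {R : Type} [CommRing R] [IsLocalRing R] (f : Fin (n + 1) → R) (z : R) :
    trimIdeal R (fun i : Fin (n + 2) => if h : (i : ℕ) < n + 1 then f ⟨i, h⟩ else z) σ =
      Ideal.span ((fun o => o.elim z f) '' (Set.range (trimIndex σ))ᶜ) ⊔
        maximalIdeal R * Ideal.span ((fun o => o.elim z f) '' Set.range (trimIndex σ)) := by
  rw [dite_lt_eq_elim_finSuccEquivLast, range_trimIndex,
    ← Set.image_compl_eq finSuccEquivLast.bijective, ← Set.image_comp, ← Set.image_comp]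
  rfl

variable {R : Type} {γ : Type*} [CommRing R] [IsLocalRing R] {x : Fin 3 → R}
  (hx : IsRegularTriple x) (hxm : Ideal.span (Set.range x) = maximalIdeal R)
  {X : Matrix (Fin (n + 1)) (Fin n) R} {z : R} (h : IsRegularCone X z)
  (hXm : ∀ i j, X i j ∈ maximalIdeal R) (hn : 3 ≤ n) {c : ConeDivision x X z} (hc : c.IsSmall)
  {col : γ → Fin n} (hcol : Injective col) {piv : γ → {i // i ∈ σ} × Fin 3}
  (hp : c.IsPivot (trimIndex σ) col piv)

include hx hxm h hXm hn hc hcol hp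

theorem isGolodQuotient_trimIdeal (hσ : Fin.last (n + 1) ∈ σ) : IsGolodQuotient R
    (trimIdeal R (fun i : Fin (n + 2) => if h : (i : ℕ) < n + 1 then signedMinor X ⟨i, h⟩ else z)
      σ) := by
  have hG := isGolodQuotient_trimmedCone hx hxm h hXm hn hc trimIndex_injective hcol hp
    (none_mem_range_trimIndex.2 hσ)
  rwa [range_splitCone_d₁_comp_trimIncl, hxm, ← trimIdeal_eq] at hG

theorem hasTorClassH_trimIdeal (hσ : Fin.last (n + 1) ∉ σ) : HasTorClassH R
    (trimIdeal R (fun i : Fin (n + 2) => if h : (i : ℕ) < n + 1 then signedMinor X ⟨i, h⟩ else z)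
      σ) (n + 1 - σ.card) (n - Nat.card γ) := by
  have hH := hasTorClassH_trimmedCone hx hxm h hXm hn hc trimIndex_injective hcol hp
    (none_mem_range_trimIndex.not.2 hσ)
  rwa [range_splitCone_d₁_comp_trimIncl, hxm, ← trimIdeal_eq, Nat.card_eq_fintype_card,
    Fintype.card_coe] at hH

end TrimIdeal

section Banded

variable {R S : Type} [CommRing R] [CommRing S] {n : ℕ} {y : Fin 3 → R}

theorem Xmat_apply_of_val_eq {i : Fin (n + 1)} {j : Fin n} {l : Fin 3} (h : (i : ℕ) = j + l) :
    Xmat y n i j = y l := by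
  fin_cases l <;> simp [Xmat, h]

theorem Xmat_mem {I : Ideal R} (hy : ∀ l, y l ∈ I) (i : Fin (n + 1)) (j : Fin n) :
    Xmat y n i j ∈ I := by
  simp only [Xmat, of_apply]
  split_ifs <;> simp [hy]

theorem Xmat_map (f : R →+* S) : (Xmat y n).map f = Xmat (f ∘ y) n := by
  ext i j
  simp [Xmat, apply_ite f]

theorem Xmat_single_apply (l : Fin 3) (a : R) (i : Fin (n + 1)) (j : Fin n) :
    Xmat (Pi.single l a) n i j = if (i : ℕ) = j + l then a else 0 := by
  fin_cases l <;> simp only [Xmat, of_apply] <;> grind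

theorem dvd_of_dvd_Xmat_mulVec (hy : IsRegularPair (y 0) (y 1)) {w : Fin n → R}
    (hw : ∀ i, y 0 ∣ (Xmat y n *ᵥ w) i) (c : Fin n) : y 0 ∣ w c := by
  induction c using WellFoundedLT.induction with
  | ind c ih =>
    have hterm : ∀ j ∈ Finset.univ.erase c, y 0 ∣ Xmat y n c.succ j * w j := by
      intro j hj
      rcases lt_trichotomy j c with hlt | rfl | hgt
      · exact dvd_mul_of_dvd_right (ih j hlt) _
      · simp at hj
      · refine dvd_mul_of_dvd_left ?_ _
        simp only [Xmat, of_apply, Fin.val_succ]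
        split_ifs <;> first | simp | omega
    refine hy.dvd_of_dvd_mul ((dvd_add_left (Finset.dvd_sum hterm)).1 ?_)
    have hrow := hw c.succ
    rwa [mulVec, dotProduct, ← Finset.add_sum_erase _ _ (Finset.mem_univ c),
      Xmat_apply_of_val_eq (l := 1) (by simp)] at hrow

theorem signedMinor_Xmat_last : signedMinor (Xmat y n) (Fin.last n) = (-1) ^ n * y 0 ^ n := by
  rw [signedMinor, det_of_isLowerTriangular]
  · simp [Xmat]
  · intro i j hij
    have hij' : (i : ℕ) < j := hij
    simp only [submatrix_apply, Fin.succAbove_last, id, Xmat, of_apply, Fin.val_castSucc]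
    rw [if_neg (by omega), if_neg (by omega), if_neg (by omega)]

theorem exact_Xmat (hy : IsRegularPair (y 0) (y 1)) :
    Exact (Xmat y n).mulVecLin (minorForm (Xmat y n)) := by
  have hlast : minorForm (Xmat y n) (((-1) ^ n : R) • Pi.single (Fin.last n) 1) = y 0 ^ n := by
    rw [map_smul, minorForm_single, signedMinor_Xmat_last, smul_eq_mul, ← mul_assoc, ← mul_pow,
      neg_one_mul, neg_neg, one_pow, one_mul]
  exact exact_of_minorForm_eq_pow hy.mem_nonZeroDivisors (fun _ => dvd_of_dvd_Xmat_mulVec hy) hlast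

theorem isRegularCone_Xmat {t : R} (hy : IsRegularPair (y 0) (y 1)) (ht : t ∈ nonZeroDivisors R)
    (hyt : IsRegularPair (Ideal.Quotient.mk (Ideal.span {t}) (y 0))
      (Ideal.Quotient.mk (Ideal.span {t}) (y 1))) (m : ℕ) :
    IsRegularCone (Xmat y n) (t ^ m) where
  exact := exact_Xmat hy
  injective := by
    refine injective_mulVec (u := Pi.single (Fin.last n) 1) ?_
    rw [minorForm_single, signedMinor_Xmat_last]
    exact mul_mem (pow_mem (IsUnit.mem_nonZeroDivisors isUnit_one.neg) n)
      (pow_mem hy.mem_nonZeroDivisors n)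
  mem_of_mul_mem := mem_of_pow_mul_mem
    (mem_range_minorForm_of_mul_mem ht (by rw [Xmat_map]; exact exact_Xmat hyt)) m

end Banded

section BandedDivision

variable {R : Type} [CommRing R] [IsLocalRing R] {n : ℕ} {x y u : Fin 3 → R}

theorem exists_isSmall_coneDivision (hxm : Ideal.span (Set.range x) = maximalIdeal R)
    (hy : ∀ l, x l * u l = y l) (hn : 3 ≤ n) {m : ℕ} (hm : 3 ≤ m) :
    ∃ c : ConeDivision x (Xmat y n) (x 2 ^ m),
      c.IsSmall ∧ ∀ l, c.entry l = Xmat (Pi.single l (u l)) n := by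
  have hxmem (l : Fin 3) : x l ∈ maximalIdeal R := hxm ▸ mem_span_range x l
  have hymem (l : Fin 3) : y l ∈ maximalIdeal R := hy l ▸ Ideal.mul_mem_right _ _ (hxmem l)
  have hminor (i : Fin (n + 1)) : signedMinor (Xmat y n) i ∈
      Ideal.span (Set.range x) * maximalIdeal R ^ 2 := by
    rw [hxm, ← pow_succ']
    exact Ideal.pow_le_pow_right hn (signedMinor_mem_pow (Xmat_mem hymem) i)
  choose b hb hxb using fun i => mem_span_range_mul_iff.1 (hminor i)
  refine ⟨⟨fun l => Xmat (Pi.single l (u l)) n, Pi.single 2 (x 2 ^ (m - 1)), b, fun i j => ?_, ?_,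
    hxb⟩, ⟨fun l => ?_, fun i => mem_smul_top_pi_iff.1 (hb i)⟩, fun _ => rfl⟩
  · simp only [dotProduct, Fin.sum_univ_three, Xmat, of_apply, ← hy]
    split_ifs <;> simp
  · rw [dotProduct_single, ← pow_succ', Nat.sub_add_cancel (by omega)]
  · by_cases hl : l = 2
    · subst hl
      simpa using Ideal.pow_le_pow_right (by omega) (Ideal.pow_mem_pow (hxmem 2) (m - 1))
    · simp [hl]

end BandedDivision

section UnitColumns

variable {R : Type} [CommRing R] [IsLocalRing R] {n : ℕ} {x : Fin 3 → R}
  {X : Matrix (Fin (n + 1)) (Fin n) R} {z : R} {c : ConeDivision x X z}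

/-- The columns of the banded matrix `Xmat x n` with a nonzero entry in a row that belongs to `σ`;
the unit entries of `Q₁` occur in these columns. -/
def unitCols (σ : Finset (Fin (n + 2))) : Set (Fin n) :=
  {j | ∃ i : Fin (n + 1), i.castSucc ∈ σ ∧ ∃ l : Fin 3, (i : ℕ) = j + l}

theorem card_unitCols_filter_lt {t : ℕ} (ht : t < n + 1) :
    Nat.card (unitCols (n := n) (Finset.univ.filter fun i => (i : ℕ) < t)) = t := by
  have heq : unitCols (n := n) (Finset.univ.filter fun i => (i : ℕ) < t) =
      Finset.univ.filter fun j : Fin n => (j : ℕ) < t := by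
    ext j
    simp only [unitCols, Finset.mem_filter, Finset.mem_univ, true_and, Fin.val_castSucc,
      Set.mem_ofPred_eq, Finset.coe_filter]
    refine ⟨?_, fun hj => ⟨j.castSucc, hj, 0, rfl⟩⟩
    rintro ⟨i, hi, l, hil⟩
    omega
  rw [heq, Nat.card_coe_set_eq, Set.ncard_coe_finset, Fin.card_filter_val_lt]
  omega

theorem ConeDivision.exists_isPivot (hc : ∀ l, c.entry l = Xmat (Pi.single l 1) n)
    (σ : Finset (Fin (n + 2))) :
    ∃ piv, c.IsPivot (trimIndex σ) (Subtype.val : unitCols σ → Fin n) piv := by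
  choose i hi l hil using fun g : unitCols σ => g.2
  refine ⟨fun g => (⟨(i g).castSucc, hi g⟩, l g), fun g g' h => ?_, fun g =>
    ⟨i g, trimIndex_eq_some_iff.2 rfl, ?_⟩, fun b l i j hb hj => ?_⟩
  · have hrow : i g = i g' :=
      Fin.castSucc_injective _ (congrArg Subtype.val (congrArg Prod.fst h))
    have hl : l g = l g' := congrArg Prod.snd h
    have hadd : ((g : Fin n) : ℕ) + l g' = g' + l g' := by rw [← hil g', ← hrow, hil g, hl]
    exact Subtype.ext (Fin.ext (Nat.add_right_cancel hadd))
  · ext j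
    simp only [hc, Xmat_single_apply, hil, Pi.single_apply, add_left_inj, Fin.ext_iff, eq_comm]
  · rw [hc, Xmat_single_apply, if_neg fun h => ?_]
    · exact zero_mem _
    · exact hj ⟨⟨j, i, trimIndex_eq_some_iff.1 hb ▸ b.2, l, h⟩, rfl⟩

theorem ConeDivision.isPivot_empty {B : Type*} {ρ : B → Option (Fin (n + 1))}
    {u : Fin 3 → R} (hu : ∀ l, u l ∈ maximalIdeal R)
    (hc : ∀ l, c.entry l = Xmat (Pi.single l (u l)) n) :
    c.IsPivot ρ (Empty.elim : Empty → Fin n) Empty.elim where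
  injective := fun e => e.elim
  entry_eq_single := fun e => e.elim
  entry_mem := fun _ l i j _ _ => by
    rw [hc, Xmat_single_apply]
    split_ifs <;> simp [hu]

end UnitColumns

section BandedTrimming

theorem isRegularTriple_rotate {R : Type*} [CommRing R] [IsNoetherianRing R] [IsLocalRing R]
    {x : Fin 3 → R} (h : RingTheory.Sequence.IsRegular R [x 0, x 1, x 2]) :
    IsRegularTriple ![x 2, x 0, x 1] :=
  .of_isWeaklyRegular (IsLocalRing.isRegular_of_perm h
    (List.perm_append_comm (l₁ := [x 0, x 1]) (l₂ := [x 2]))).toIsWeaklyRegular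

section

variable {R : Type} [CommRing R] {x : Fin 3 → R} {n : ℕ} (hx : IsRegularTriple x)
  (hx' : IsRegularTriple ![x 2, x 0, x 1])
include hx hx'

theorem isRegularCone_Xmat_self (m : ℕ) : IsRegularCone (Xmat x n) (x 2 ^ m) :=
  isRegularCone_Xmat hx.toIsRegularPair hx'.mem_nonZeroDivisors hx'.isRegularPair_mk m

theorem isRegularCone_Xmat_sq (m : ℕ) :
    IsRegularCone (Xmat (fun l => x l ^ 2) n) (x 2 ^ m) := by
  refine isRegularCone_Xmat hx.sq_sq hx'.mem_nonZeroDivisors ?_ m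
  rw [map_pow, map_pow]
  exact hx'.isRegularPair_mk.sq_sq

end

variable {R : Type} [CommRing R] [IsLocalRing R] {x : Fin 3 → R} {n : ℕ}

theorem exists_isPivot_Xmat (hxm : Ideal.span (Set.range x) = maximalIdeal R) (hn : 3 ≤ n)
    (σ : Finset (Fin (n + 2))) : ∃ c : ConeDivision x (Xmat x n) (x 2 ^ n), c.IsSmall ∧
      ∃ piv, c.IsPivot (trimIndex σ) (Subtype.val : unitCols σ → Fin n) piv := by
  obtain ⟨c, hc, hentry⟩ := exists_isSmall_coneDivision (u := 1) hxm (fun l => mul_one _) hn hn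
  exact ⟨c, hc, ConeDivision.exists_isPivot hentry σ⟩

theorem exists_isPivot_Xmat_sq {B : Type*} (hxm : Ideal.span (Set.range x) = maximalIdeal R)
    (hn : 3 ≤ n) (ρ : B → Option (Fin (n + 1))) :
    ∃ c : ConeDivision x (Xmat (fun l => x l ^ 2) n) (x 2 ^ (2 * n)), c.IsSmall ∧
      c.IsPivot ρ (Empty.elim : Empty → Fin n) Empty.elim := by
  obtain ⟨c, hc, hentry⟩ := exists_isSmall_coneDivision (y := fun l => x l ^ 2) hxm
    (fun l => (sq _).symm) hn (show 3 ≤ 2 * n by omega)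
  exact ⟨c, hc, ConeDivision.isPivot_empty (fun l => hxm ▸ mem_span_range x l) hentry⟩

variable {σ : Finset (Fin (n + 2))} (hx : IsRegularTriple x)
  (hx' : IsRegularTriple ![x 2, x 0, x 1])
  (hxm : Ideal.span (Set.range x) = maximalIdeal R) (hn : 3 ≤ n)

include hx hxm hn

theorem rank_comparison_Xmat (hσ : Fin.last (n + 1) ∉ σ)
    {q : {i // i ∈ σ} → ((Fin (n + 1) → R) × (Fin n → R)) →ₗ[R] (Fin 3 → R)}
    (hq : ∀ (i : {i // i ∈ σ}) (v : (Fin (n + 1) → R) × (Fin n → R)),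
      q i v 0 * x 0 + q i v 1 * x 1 + q i v 2 * x 2 =
        if h : (i : ℕ) < n + 1 then (Xmat x n *ᵥ v.2 - x 2 ^ n • v.1) ⟨i, h⟩
        else ∑ j, v.1 j * minorDelta x n j) :
    (Matrix.of fun (p : {i // i ∈ σ} × Fin 3) (j : Fin (n + 1) ⊕ Fin n) =>
      Ideal.Quotient.mk (maximalIdeal R) (q p.1 (Sum.elim (fun a => (Pi.single a 1, 0))
        (fun c => (0, Pi.single c 1)) j) p.2)).rank = Nat.card (unitCols σ) := by
  obtain ⟨c, hc, piv, hp⟩ := exists_isPivot_Xmat hxm hn σ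
  refine hp.rank_eq_card Subtype.val_injective hc hx hxm (none_mem_range_trimIndex.not.2 hσ)
    fun b i v hb => ?_
  have hval : (b : Fin (n + 2)) = i.castSucc := trimIndex_eq_some_iff.1 hb
  have hqb := hq b v
  simp only [hval, Fin.val_castSucc, i.isLt, dite_true] at hqb
  simpa [dotProduct, Fin.sum_univ_three, mul_comm] using hqb

include hx'

theorem hasTorClassH_trim_Xmat (hσ : Fin.last (n + 1) ∉ σ) : HasTorClassH R
    (trimIdeal R (fun i : Fin (n + 2) => if h : (i : ℕ) < n + 1 then minorDelta x n ⟨i, h⟩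
      else x 2 ^ n) σ) (n + 1 - σ.card) (n - Nat.card (unitCols σ)) := by
  obtain ⟨c, hc, piv, hp⟩ := exists_isPivot_Xmat hxm hn σ
  exact hasTorClassH_trimIdeal hx hxm (isRegularCone_Xmat_self hx hx' n)
    (Xmat_mem fun l => hxm ▸ mem_span_range x l) hn hc Subtype.val_injective hp hσ

theorem isGolodQuotient_trim_Xmat (hσ : Fin.last (n + 1) ∈ σ) : IsGolodQuotient R
    (trimIdeal R (fun i : Fin (n + 2) => if h : (i : ℕ) < n + 1 then minorDelta x n ⟨i, h⟩
      else x 2 ^ n) σ) := by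
  obtain ⟨c, hc, piv, hp⟩ := exists_isPivot_Xmat hxm hn σ
  exact isGolodQuotient_trimIdeal hx hxm (isRegularCone_Xmat_self hx hx' n)
    (Xmat_mem fun l => hxm ▸ mem_span_range x l) hn hc Subtype.val_injective hp hσ

theorem hasTorClassH_trim_Xmat_sq (hσ : Fin.last (n + 1) ∉ σ) : HasTorClassH R
    (trimIdeal R (fun i : Fin (n + 2) => if h : (i : ℕ) < n + 1 then minorDelta' x n ⟨i, h⟩
      else x 2 ^ (2 * n)) σ) (n + 1 - σ.card) n := by
  obtain ⟨c, hc, hp⟩ := exists_isPivot_Xmat_sq hxm hn (trimIndex σ)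
  have h := hasTorClassH_trimIdeal hx hxm (isRegularCone_Xmat_sq hx hx' _)
    (Xmat_mem fun l => Ideal.pow_mem_of_mem _ (hxm ▸ mem_span_range x l) 2 two_pos) hn hc
    (injective_of_subsingleton _) hp hσ
  rwa [Nat.card_of_isEmpty, Nat.sub_zero] at h

theorem isGolodQuotient_trim_Xmat_sq (hσ : Fin.last (n + 1) ∈ σ) : IsGolodQuotient R
    (trimIdeal R (fun i : Fin (n + 2) => if h : (i : ℕ) < n + 1 then minorDelta' x n ⟨i, h⟩
      else x 2 ^ (2 * n)) σ) := by
  obtain ⟨c, hc, hp⟩ := exists_isPivot_Xmat_sq hxm hn (trimIndex σ)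
  exact isGolodQuotient_trimIdeal hx hxm (isRegularCone_Xmat_sq hx hx' _)
    (Xmat_mem fun l => Ideal.pow_mem_of_mem _ (hxm ▸ mem_span_range x l) 2 two_pos) hn hc
    (injective_of_subsingleton _) hp hσ

end BandedTrimming

end HilbertBurchTrim

open HilbertBurchTrim

/-!
STATEMENT 19 (Corollary 5.12): let `(R,𝔪,k)` be regular local of dimension 3 with
`𝔪 = (x 0, x 1, x 2)` and `p = P+1 ≥ 4`.  Let `J_p = I_{p-1}(X_p) + (x₃^{p-1})` with
generators `φ = (Δ_0, …, Δ_{p-1}, x₃^{p-1})` and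
`J'_p = I_{p-1}(X'_p) + (x₃^{2(p-1)})` with generators
`φ' = (Δ'_0, …, Δ'_{p-1}, x₃^{2(p-1)})` (the last 0-based generator index is `P+1`,
the paper's `p+1`).  Both quotients have Tor-algebra class `H(p, p-1)`.  Let `σ` be an
index set of cardinality `t` and `Q₁` the degree-1 comparison map of the associated
trimming complex, i.e. any family `q i : F₂ → K₁` (`i ∈ σ`) with `m₁ ∘ q i = d₀'ⁱ`,
the `i`-th coordinate of the differential `d₂` of the minimal resolution
`F_• = (H ⊗ G)_•` of `R/J_p`.  Then:
(1) if `p+1 ∉ σ`, `tm_σ(J_p)` is Golod or of class `H(p-t, p-1-rank_k(Q₁⊗k))`; in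
    particular for `σ = [t]`, `t < p`, `tm_{[t]}(J_p)` has class `H(p-t, p-1-t)`;
(2) if `p+1 ∈ σ`, `tm_σ(J_p)` is Golod;
(3) if `p+1 ∉ σ`, `tm_σ(J'_p)` has class `H(p-t, p-1)`;
(4) if `p+1 ∈ σ`, `tm_σ(J'_p)` is Golod.
-/
theorem trim_hilbert_burch_classH
    {R : Type} [CommRing R] [IsNoetherianRing R] [IsLocalRing R]
    (x : Fin 3 → R)
    (hreg : RingTheory.Sequence.IsRegular R [x 0, x 1, x 2])
    (hx : Ideal.span {x 0, x 1, x 2} = maximalIdeal R)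
    (P : ℕ) (hP : 3 ≤ P)
    (σ : Finset (Fin (P + 2))) :
    -- (1)
    ((⟨P + 1, by omega⟩ : Fin (P + 2)) ∉ σ →
      (∀ q : {i // i ∈ σ} → (((Fin (P + 1) → R) × (Fin P → R)) →ₗ[R] (Fin 3 → R)),
        (∀ (i : {i // i ∈ σ}) (v : (Fin (P + 1) → R) × (Fin P → R)),
          (q i v 0) * x 0 + (q i v 1) * x 1 + (q i v 2) * x 2 =
          (if h : ((i : Fin (P + 2)) : ℕ) < P + 1 then
            ((Xmat x P).mulVec v.2 - x 2 ^ P • v.1) ⟨((i : Fin (P + 2)) : ℕ), h⟩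
          else ∑ jj, v.1 jj * minorDelta x P jj)) →
        IsGolodQuotient R (trimIdeal R
          (fun i : Fin (P + 2) => if h : (i : ℕ) < P + 1
            then minorDelta x P ⟨(i : ℕ), h⟩ else x 2 ^ P) σ) ∨
        HasTorClassH R (trimIdeal R
          (fun i : Fin (P + 2) => if h : (i : ℕ) < P + 1
            then minorDelta x P ⟨(i : ℕ), h⟩ else x 2 ^ P) σ)
          (P + 1 - σ.card)
          (P - (Matrix.of fun (il : {i // i ∈ σ} × Fin 3)
              (b : (Fin (P + 1)) ⊕ (Fin P)) =>
            Ideal.Quotient.mk (maximalIdeal R)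
              (q il.1 (Sum.elim (fun a => (Pi.single a 1, 0))
                (fun c => (0, Pi.single c 1)) b) il.2)).rank))) ∧
    -- (1), "in particular": σ = [t] with t < p
    ((∀ t : ℕ, t < P + 1 →
      HasTorClassH R (trimIdeal R
        (fun i : Fin (P + 2) => if h : (i : ℕ) < P + 1
          then minorDelta x P ⟨(i : ℕ), h⟩ else x 2 ^ P)
        (Finset.univ.filter (fun i : Fin (P + 2) => (i : ℕ) < t)))
        (P + 1 - t) (P - t))) ∧
    -- (2)
    ((⟨P + 1, by omega⟩ : Fin (P + 2)) ∈ σ →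
      IsGolodQuotient R (trimIdeal R
        (fun i : Fin (P + 2) => if h : (i : ℕ) < P + 1
          then minorDelta x P ⟨(i : ℕ), h⟩ else x 2 ^ P) σ)) ∧
    -- (3)
    ((⟨P + 1, by omega⟩ : Fin (P + 2)) ∉ σ →
      HasTorClassH R (trimIdeal R
        (fun i : Fin (P + 2) => if h : (i : ℕ) < P + 1
          then minorDelta' x P ⟨(i : ℕ), h⟩ else x 2 ^ (2 * P)) σ)
        (P + 1 - σ.card) P) ∧
    -- (4)
    ((⟨P + 1, by omega⟩ : Fin (P + 2)) ∈ σ →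
      IsGolodQuotient R (trimIdeal R
        (fun i : Fin (P + 2) => if h : (i : ℕ) < P + 1
          then minorDelta' x P ⟨(i : ℕ), h⟩ else x 2 ^ (2 * P)) σ)) := by
  have hrange : Ideal.span (Set.range x) = maximalIdeal R := by
    rw [← hx]
    congr 1
    ext
    simp [Fin.exists_fin_succ, eq_comm]
  have hx₁ := IsRegularTriple.of_isWeaklyRegular hreg.toIsWeaklyRegular
  have hx₂ := isRegularTriple_rotate hreg
  refine ⟨fun hσ q hq => Or.inr ?_, fun t ht => ?_,
    isGolodQuotient_trim_Xmat hx₁ hx₂ hrange hP, hasTorClassH_trim_Xmat_sq hx₁ hx₂ hrange hP,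
    isGolodQuotient_trim_Xmat_sq hx₁ hx₂ hrange hP⟩
  · rw [rank_comparison_Xmat hx₁ hrange hP hσ hq]
    exact hasTorClassH_trim_Xmat hx₁ hx₂ hrange hP hσ
  · have h := hasTorClassH_trim_Xmat (σ := Finset.univ.filter fun i => (i : ℕ) < t) hx₁ hx₂ hrange
      hP (by simpa using ht.le)
    rwa [Fin.card_filter_val_lt, min_eq_right (by omega), card_unitCols_filter_lt ht] at h
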